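/- arXiv:1512.07838 — 2 statements merged into one kernel-verified Lean document; each statement's English description precedes it below -/
import Mathlib

section
/- Let (Ω, Σ, μ) be a finite atomless measure space, X a Köthe F-space on (Ω, Σ, μ), Z the set of all signs in X, Y an F-space with a transfinite basis, T_1 : X → Y a continuous linear narrow operator, and T_2 : X → Y a continuous linear narrow operator such that T_2(Z) is relatively compact in Y. Then T_1 + T_2 is narrow. -/
/-!
Narrowness of `T₂` and total boundedness of `T₂(Z)` make `T₂` uniformly small on the pieces of some
finite partition of `A`. If not, some set `R` cannot be finely partitioned although `T₂` is almost
zero on one half of every splitting of `R` in two. Two signs with the same support in `R` then have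
almost the same image up to sign, so that narrowness makes `T₂` small on all of `R`.

Cover `T₂(Z)` by `k` balls of small radius, partition `A` into `m` pieces on which `T₂` is small
compared with `1 / k`, and pick on each piece a mean zero sign `x i` with `‖T₁ (x i)‖` small
compared with `1 / m`. However the signs `θ i = ±1` are chosen, `∑ i, θ i • x i` is a mean zero sign
on `A` with small image under `T₁`. For `T₂` they are provided by the octahedral Tucker lemma: among
the vectors `θ ∈ {-1, 0, 1} ^ m` with at most `k` zeros, two that are opposite up to `k` coordinates
have images in the same ball.
-/

open MeasureTheory

/-- A measure is atomless if every set of positive measure has a subset of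
strictly smaller positive measure. -/
def Atomless {Ω : Type*} [MeasurableSpace Ω] (μ : Measure Ω) : Prop :=
  ∀ A : Set Ω, MeasurableSet A → 0 < μ A →
    ∃ B : Set Ω, B ⊆ A ∧ MeasurableSet B ∧ 0 < μ B ∧ μ B < μ A

/-- The structure of an F-space (complete invariant-metric linear space) on a real
vector space `Y`, encoded via its F-norm. -/
structure FSpaceNorm (Y : Type*) [AddCommGroup Y] [Module ℝ Y] : Type _ where
  norm : Y → ℝ
  nonneg : ∀ y, 0 ≤ norm y
  eq_zero_iff : ∀ y, norm y = 0 ↔ y = 0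
  neg : ∀ y, norm (-y) = norm y
  add_le : ∀ y z, norm (y + z) ≤ norm y + norm z
  smul_le : ∀ (a : ℝ) (y : Y), |a| ≤ 1 → norm (a • y) ≤ norm y
  smul_cont : ∀ y : Y, ∀ ε > 0, ∃ δ > 0, ∀ a : ℝ, |a| ≤ δ → norm (a • y) ≤ ε
  complete : ∀ u : ℕ → Y,
    (∀ ε > 0, ∃ N : ℕ, ∀ m ≥ N, ∀ n ≥ N, norm (u m - u n) ≤ ε) →
    ∃ y : Y, ∀ ε > 0, ∃ N : ℕ, ∀ n ≥ N, norm (u n - y) ≤ ε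

/-- A Köthe F-space on a measure space `(Ω, Σ, μ)`: a solid linear subspace of the
measurable functions containing the constant `1`, with a complete F-norm. -/
structure KotheFSpace (Ω : Type*) [MeasurableSpace Ω] (μ : Measure Ω) : Type _ where
  Mem : (Ω → ℝ) → Prop
  norm : (Ω → ℝ) → ℝ
  measurable_of_mem : ∀ f, Mem f → Measurable f
  add_mem : ∀ f g, Mem f → Mem g → Mem (f + g)
  smul_mem : ∀ (c : ℝ) f, Mem f → Mem (c • f)
  one_mem : Mem (fun _ => 1)
  solid_mem : ∀ f g, Measurable f → Mem g → (∀ ω, |f ω| ≤ |g ω|) → Mem f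
  solid_norm : ∀ f g, Mem f → Mem g → (∀ ω, |f ω| ≤ |g ω|) → norm f ≤ norm g
  nonneg : ∀ f, 0 ≤ norm f
  add_le : ∀ f g, Mem f → Mem g → norm (f + g) ≤ norm f + norm g
  smul_le : ∀ (c : ℝ) f, |c| ≤ 1 → Mem f → norm (c • f) ≤ norm f
  complete : ∀ u : ℕ → (Ω → ℝ), (∀ n, Mem (u n)) →
    (∀ ε > 0, ∃ N : ℕ, ∀ m ≥ N, ∀ n ≥ N, norm (u m - u n) ≤ ε) →
    ∃ f, Mem f ∧ ∀ ε > 0, ∃ N : ℕ, ∀ n ≥ N, norm (u n - f) ≤ ε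

/-- A sign: a measurable `{-1,0,1}`-valued function. -/
def IsSign {Ω : Type*} [MeasurableSpace Ω] (x : Ω → ℝ) : Prop :=
  Measurable x ∧ ∀ ω, x ω = -1 ∨ x ω = 0 ∨ x ω = 1

/-- A sign on a set `A`: its support is `A`. -/
def IsSignOn {Ω : Type*} [MeasurableSpace Ω] (x : Ω → ℝ) (A : Set Ω) : Prop :=
  IsSign x ∧ Function.support x = A

/-- A mean zero sign on `A`. -/
def IsMeanZeroSignOn {Ω : Type*} [MeasurableSpace Ω] (μ : Measure Ω)
    (x : Ω → ℝ) (A : Set Ω) : Prop :=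
  IsSignOn x A ∧ ∫ ω, x ω ∂μ = 0

/-- A continuous linear operator from a Köthe F-space `X` into an F-space `(Y, FY)`. -/
structure KOperator {Ω : Type*} [MeasurableSpace Ω] {μ : Measure Ω}
    (X : KotheFSpace Ω μ) (Y : Type*) [AddCommGroup Y] [Module ℝ Y]
    (FY : FSpaceNorm Y) : Type _ where
  toFun : (Ω → ℝ) → Y
  map_add : ∀ f g, X.Mem f → X.Mem g → toFun (f + g) = toFun f + toFun g
  map_smul : ∀ (c : ℝ) f, X.Mem f → toFun (c • f) = c • toFun f
  cont : ∀ ε > 0, ∃ δ > 0, ∀ f, X.Mem f → X.norm f ≤ δ → FY.norm (toFun f) ≤ ε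

/-- `T` is narrow: every set of positive measure carries a mean zero sign whose image
has arbitrarily small norm. -/
def KOperator.Narrow {Ω : Type*} [MeasurableSpace Ω] {μ : Measure Ω}
    {X : KotheFSpace Ω μ} {Y : Type*} [AddCommGroup Y] [Module ℝ Y]
    {FY : FSpaceNorm Y} (T : KOperator X Y FY) : Prop :=
  ∀ A : Set Ω, MeasurableSet A → 0 < μ A → ∀ ε > 0,
    ∃ x : Ω → ℝ, IsMeanZeroSignOn μ x A ∧ FY.norm (T.toFun x) < ε

/-- The image `T(Z)` of the set of all signs is relatively compact (equivalently, since
`Y` is complete, totally bounded). -/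
def KOperator.RelCompactSigns {Ω : Type*} [MeasurableSpace Ω] {μ : Measure Ω}
    {X : KotheFSpace Ω μ} {Y : Type*} [AddCommGroup Y] [Module ℝ Y]
    {FY : FSpaceNorm Y} (T : KOperator X Y FY) : Prop :=
  ∀ ε > 0, ∃ (n : ℕ) (c : Fin n → Y), ∀ x : Ω → ℝ, IsSign x →
    ∃ i : Fin n, FY.norm (T.toFun x - c i) ≤ ε

/-- A transfinite basis of an F-space `(Y, F)` over a well-ordered index type `I`:
every `y` has a unique transfinite expansion `y = ∑_{i ∈ I} (coeff i y) • e i` with at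
most countably many nonzero coefficients; `psum y i` is the partial sum
`∑_{j < i} (coeff j y) • e j`, defined by transfinite recursion (taking limits at
limit stages) and converging to `y`. -/
structure TransfiniteBasis {Y : Type*} [AddCommGroup Y] [Module ℝ Y]
    (F : FSpaceNorm Y) (I : Type*) [LinearOrder I] : Type _ where
  wo : IsWellOrder I (· < ·)
  e : I → Y
  coeff : I → Y → ℝ
  coeff_linear : ∀ i, IsLinearMap ℝ (coeff i)
  countable_support : ∀ y : Y, Set.Countable {i | coeff i y ≠ 0}
  psum : Y → I → Y
  psum_min : ∀ (y : Y) (i : I), IsMin i → psum y i = 0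
  psum_succ : ∀ (y : Y) (i j : I), i ⋖ j → psum y j = psum y i + coeff i y • e i
  psum_limit : ∀ (y : Y) (i : I), ¬ IsMin i → (∀ j, ¬ j ⋖ i) →
    ∀ ε > (0 : ℝ), ∃ j < i, ∀ k, j ≤ k → k < i → F.norm (psum y k - psum y i) ≤ ε
  psum_tendsto : ∀ y : Y, ∀ ε > (0 : ℝ), ∃ i : I, ∀ j, i ≤ j →
    F.norm (psum y j - y) ≤ ε
  coeff_unique : ∀ y : Y, (∀ i, coeff i y = 0) → y = 0

/-! ### Chains as polynomials in characteristic two -/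

namespace OctahedralTucker

open MvPolynomial

section Chain

variable {σ τ R : Type*} [CommRing R]

/-- The simplicial boundary of a chain. A chain of simplices with vertices in `σ` is encoded as a
polynomial, the simplex on a finite set of vertices being the product of their variables, so that
the boundary modulo two is the derivation sending every variable to `1`. -/
noncomputable def boundary (σ R : Type*) [CommRing R] :
    Derivation R (MvPolynomial σ R) (MvPolynomial σ R) :=
  mkDerivation R fun _ => 1

@[simp]
theorem boundary_X (a : σ) : boundary σ R (X a) = 1 :=
  mkDerivation_X ..

theorem boundary_rename (f : σ → τ) (p : MvPolynomial σ R) :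
    boundary τ R (rename f p) = rename f (boundary σ R p) := by
  induction p using MvPolynomial.induction_on with
  | C r => simp
  | add p q hp hq => simp only [map_add, hp, hq]
  | mul_X p a hp => simp [Derivation.leibniz, hp]

theorem derivation_comm_of_comm_X {D₁ D₂ : Derivation R (MvPolynomial σ R) (MvPolynomial σ R)}
    (h : ∀ a, D₁ (D₂ (X a)) = D₂ (D₁ (X a))) (p : MvPolynomial σ R) :
    D₁ (D₂ p) = D₂ (D₁ p) := by
  have hD : ⁅D₁, D₂⁆ = 0 :=
    derivation_ext fun a => by simp [Derivation.commutator_apply, h a]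
  exact sub_eq_zero.1 (by rw [← Derivation.commutator_apply, hD, Derivation.zero_apply])

theorem pderiv_pderiv_comm (a b : σ) (p : MvPolynomial σ R) :
    pderiv a (pderiv b p) = pderiv b (pderiv a p) := by
  classical
  refine derivation_comm_of_comm_X (fun w => ?_) p
  simp only [pderiv_X, Pi.single_apply]
  split_ifs <;> simp

theorem boundary_pderiv_comm (a : σ) (p : MvPolynomial σ R) :
    boundary σ R (pderiv a p) = pderiv a (boundary σ R p) := by
  classical
  refine derivation_comm_of_comm_X (fun w => ?_) p
  simp only [pderiv_X, Pi.single_apply, boundary_X]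
  split_ifs <;> simp

theorem pderiv_pderiv_self [CharP R 2] (a : σ) (p : MvPolynomial σ R) :
    pderiv a (pderiv a p) = 0 := by
  classical
  induction p using MvPolynomial.induction_on with
  | C r => simp
  | add p q hp hq => simp only [map_add, hp, hq, add_zero]
  | mul_X p b hp =>
    by_cases hab : b = a
    · subst hab
      simp [Derivation.leibniz, hp, CharTwo.add_self_eq_zero]
    · simp [Derivation.leibniz, hp, pderiv_X_of_ne hab]

theorem sum_sum_erase_eq_zero_of_symm {ι A : Type*} [DecidableEq ι] [CommRing A] [CharP A 2]
    (s : Finset ι) {f : ι → ι → A} (hf : ∀ i j, f i j = f j i) :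
    ∑ i ∈ s, ∑ j ∈ s.erase i, f i j = 0 := by
  rw [Finset.sum_sigma']
  refine Finset.sum_involution (fun p _ => ⟨p.2, p.1⟩) (fun p _ => ?_) (fun p hp _ => ?_)
    (fun p hp => ?_) fun p _ => rfl
  · rw [hf, CharTwo.add_self_eq_zero]
  · have hne := Finset.ne_of_mem_erase (Finset.mem_sigma.1 hp).2
    exact fun h => hne (congrArg Sigma.fst h)
  · simp only [Finset.mem_sigma, Finset.mem_erase] at hp ⊢
    exact ⟨hp.2.2, hp.2.1.symm, hp.1⟩

end Chain

section Label

variable {R : Type*} [CommRing R] {k : ℕ}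

/-- Negation of signed labels; `(i, true)` and `(i, false)` stand for `+i` and `-i`. -/
def antipode {α : Type*} : α × Bool → α × Bool :=
  Prod.map id not

theorem antipode_involutive {α : Type*} : Function.Involutive (antipode (α := α)) :=
  fun a => Prod.ext rfl (Bool.not_not a.2)

/-- The restriction of a chain to the simplices none of whose labels is `±0`, the remaining labels
being shifted down. -/
noncomputable def restrict :
    MvPolynomial (Fin (k + 1) × Bool) R →ₐ[R] MvPolynomial (Fin k × Bool) R :=
  aeval fun a => Fin.cases 0 (fun i => X (i, a.2)) a.1

@[simp]
theorem restrict_X_zero (b : Bool) :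
    restrict (X (0, b) : MvPolynomial (Fin (k + 1) × Bool) R) = 0 := by
  simp [restrict]

@[simp]
theorem restrict_X_succ (i : Fin k) (b : Bool) :
    restrict (X (i.succ, b) : MvPolynomial (Fin (k + 1) × Bool) R) = X (i, b) := by
  simp [restrict]

theorem rename_antipode_rename_antipode (p : MvPolynomial (Fin k × Bool) R) :
    rename antipode (rename antipode p) = p := by
  rw [rename_rename, antipode_involutive.comp_self, rename_id_apply]

theorem pderiv_rename_antipode (a : Fin k × Bool) (p : MvPolynomial (Fin k × Bool) R) :
    pderiv a (rename antipode p) = rename antipode (pderiv (antipode a) p) := by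
  rw [← pderiv_rename antipode_involutive.injective, antipode_involutive]

theorem restrict_rename_antipode (p : MvPolynomial (Fin (k + 1) × Bool) R) :
    restrict (rename antipode p) = rename antipode (restrict p) := by
  rw [← AlgHom.comp_apply, ← AlgHom.comp_apply]
  congr 1
  ext ⟨i, b⟩
  cases i using Fin.cases <;> simp [antipode]

theorem pderiv_restrict (i : Fin k) (b : Bool) (p : MvPolynomial (Fin (k + 1) × Bool) R) :
    pderiv (i, b) (restrict p) = restrict (pderiv (i.succ, b) p) := by
  classical
  induction p using MvPolynomial.induction_on with
  | C r => simp
  | add p q hp hq => simp only [map_add, hp, hq]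
  | mul_X p a hp =>
    obtain ⟨j, b'⟩ := a
    cases j using Fin.cases <;>
      simp [Derivation.leibniz, hp, pderiv_X, Pi.single_apply, apply_ite]

theorem restrict_boundary (p : MvPolynomial (Fin (k + 1) × Bool) R) :
    restrict (boundary _ R p) = boundary _ R (restrict p) +
      restrict (pderiv (0, true) p) + restrict (pderiv (0, false) p) := by
  classical
  induction p using MvPolynomial.induction_on with
  | C r => simp
  | add p q hp hq => simp only [map_add, hp, hq]; ring
  | mul_X p a hp =>
    obtain ⟨j, b⟩ := a
    cases j using Fin.cases <;> cases b <;>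
      simp [Derivation.leibniz, hp, pderiv_X] <;> ring

/-- The chain has no simplex with two opposite labels. -/
def AvoidsAntipodes (p : MvPolynomial (Fin k × Bool) R) : Prop :=
  ∀ i, pderiv (i, true) (pderiv (i, false) p) = 0

theorem AvoidsAntipodes.add {p q : MvPolynomial (Fin k × Bool) R} (hp : AvoidsAntipodes p)
    (hq : AvoidsAntipodes q) : AvoidsAntipodes (p + q) := fun i => by
  simp only [map_add, hp i, hq i, add_zero]

theorem AvoidsAntipodes.restrict {p : MvPolynomial (Fin (k + 1) × Bool) R}
    (hp : AvoidsAntipodes p) : AvoidsAntipodes (restrict p) := fun i => by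
  rw [pderiv_restrict, pderiv_restrict, hp, map_zero]

theorem AvoidsAntipodes.rename_antipode {p : MvPolynomial (Fin k × Bool) R}
    (hp : AvoidsAntipodes p) : AvoidsAntipodes (rename antipode p) := fun i => by
  rw [pderiv_rename_antipode, pderiv_rename_antipode, pderiv_pderiv_comm]
  exact (congrArg _ (hp i)).trans (map_zero _)

theorem AvoidsAntipodes.pderiv {p : MvPolynomial (Fin k × Bool) R}
    (hp : AvoidsAntipodes p) (a : Fin k × Bool) : AvoidsAntipodes (pderiv a p) := fun i => by
  rw [pderiv_pderiv_comm _ a, pderiv_pderiv_comm _ a, hp, map_zero]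

variable [CharP R 2]

/-- One step of the elimination of the label `±0`. -/
noncomputable def eliminate (p q : MvPolynomial (Fin (k + 1) × Bool) R) :
    MvPolynomial (Fin k × Bool) R :=
  restrict p + rename antipode (restrict (pderiv (0, true) q))

theorem boundary_eliminate {p q : MvPolynomial (Fin (k + 1) × Bool) R} (hq : AvoidsAntipodes q)
    (hpq : boundary _ R q = p + rename antipode p) :
    boundary _ R (eliminate p q) = restrict (boundary _ R p) +
      (restrict (pderiv (0, true) p) + rename antipode (restrict (pderiv (0, true) p))) := by
  have hp := restrict_boundary p
  have hq' := restrict_boundary (pderiv (0, true) q)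
  rw [pderiv_pderiv_self, ← pderiv_pderiv_comm (0, true) (0, false), hq 0, boundary_pderiv_comm,
    hpq, map_add, pderiv_rename_antipode, map_add, restrict_rename_antipode, map_zero, add_zero,
    add_zero] at hq'
  rw [eliminate, map_add, boundary_rename, ← hq', hp, map_add, rename_antipode_rename_antipode]
  have h₁ := CharTwo.add_self_eq_zero (restrict (pderiv (0, true) p))
  simp only [antipode, Prod.map, id, Bool.not_true]
  linear_combination -h₁

/-- Chains on `k` pairs of opposite labels cannot form an antipodal `k`-sphere, of which the `c j`
are the hemispheres; the antipodal error term `b` is needed for the induction. -/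
theorem not_antipodal_hemispheres [Nontrivial R] {k : ℕ}
    {c : Fin (k + 1) → MvPolynomial (Fin k × Bool) R} (hc : ∀ j, AvoidsAntipodes (c j))
    (b : MvPolynomial (Fin k × Bool) R)
    (hc_zero : boundary _ R (c 0) = 1 + (b + rename antipode b))
    (hc_succ : ∀ j : Fin k,
      boundary _ R (c j.succ) = c j.castSucc + rename antipode (c j.castSucc)) :
    False := by
  induction k with
  | zero =>
    obtain ⟨r, hr⟩ := C_surjective (Fin 0 × Bool) (c 0)
    obtain ⟨s, rfl⟩ := C_surjective (Fin 0 × Bool) b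
    rw [← hr, derivation_C, rename_C, CharTwo.add_self_eq_zero, add_zero] at hc_zero
    exact zero_ne_one hc_zero
  | succ k ih =>
    refine ih (c := fun j => eliminate (c j.castSucc) (c j.succ)) (fun j => ?_)
      (restrict b + restrict (pderiv (0, true) (c 0))) ?_ fun j => ?_
    · exact (hc _).restrict.add ((hc _).pderiv _).restrict.rename_antipode
    · rw [boundary_eliminate (hc _) (hc_succ 0), Fin.castSucc_zero, hc_zero]
      simp only [map_add, map_one, restrict_rename_antipode]
      ring
    · rw [boundary_eliminate (hc _) (hc_succ j.succ), ← Fin.succ_castSucc, hc_succ]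
      simp only [eliminate, map_add, restrict_rename_antipode, rename_antipode_rename_antipode,
        Fin.succ_castSucc]
      ring

end Label

section Flag

variable {ι σ R : Type*} [CommRing R]

/-- The face relation of the boundary of the cross-polytope, whose faces are encoded as sign
vectors: the vertices of `x` are the vectors `x i • e i` with `x i ≠ 0`. -/
def IsFace (x y : ι → SignType) : Prop :=
  ∀ i, x i ≠ 0 → y i = x i

theorem IsFace.refl (x : ι → SignType) : IsFace x x := fun _ _ => rfl

theorem IsFace.trans {x y z : ι → SignType} (hxy : IsFace x y) (hyz : IsFace y z) : IsFace x z :=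
  fun i hi => (hyz i (hxy i hi ▸ hi)).trans (hxy i hi)

theorem neg_ne_zero_iff {x : ι → SignType} : -x ≠ 0 ↔ x ≠ 0 := by
  simp [funext_iff]

theorem IsFace.neg {x y : ι → SignType} (h : IsFace x y) : IsFace (-x) (-y) := fun i hi => by
  simp only [Pi.neg_apply, ne_eq, SignType.neg_eq_zero_iff] at hi ⊢
  rw [h i hi]

theorem isFace_update_zero [DecidableEq ι] (x : ι → SignType) (i : ι) :
    IsFace (Function.update x i 0) x := by
  intro j hj
  rw [Function.update_of_ne]
  rintro rfl
  exact hj (Function.update_self ..)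

variable [Fintype ι]

/-- The coordinates at which a sign vector does not vanish. -/
def supp (x : ι → SignType) : Finset ι := {i | x i ≠ 0}

theorem mem_supp {x : ι → SignType} {i : ι} : i ∈ supp x ↔ x i ≠ 0 := by
  simp [supp]

theorem supp_neg (x : ι → SignType) : supp (-x) = supp x := by
  ext i
  simp [mem_supp]

theorem supp_eq_empty {x : ι → SignType} : supp x = ∅ ↔ x = 0 := by
  simp [Finset.eq_empty_iff_forall_notMem, mem_supp, funext_iff]

theorem IsFace.card_supp_lt {x y : ι → SignType} (hxy : IsFace x y) (hne : x ≠ y) :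
    (supp x).card < (supp y).card := by
  have hsub : supp x ⊆ supp y := fun i hi => by
    rw [mem_supp] at hi ⊢
    rwa [hxy i hi]
  refine Finset.card_lt_card (hsub.ssubset_of_ne fun h => hne (funext fun i => ?_))
  by_cases hi : i ∈ supp x
  · exact (hxy i (mem_supp.1 hi)).symm
  · have hi' := h ▸ hi
    rw [mem_supp, not_not] at hi hi'
    rw [hi, hi']

variable [DecidableEq ι]

theorem supp_update_zero (x : ι → SignType) (i : ι) :
    supp (Function.update x i 0) = (supp x).erase i := by
  ext j
  by_cases h : j = i <;> simp [mem_supp, h]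

/-- The barycentric subdivision of the face `x`: the sum of the images under the vertex map `ℓ` of
all maximal chains of nonempty faces of `x`, built as the cone from `ℓ x` over the subdivision of
the boundary. -/
noncomputable def flagSum (R : Type*) [CommRing R] (ℓ : (ι → SignType) → σ) (x : ι → SignType) :
    MvPolynomial σ R :=
  if x = 0 then 1
  else X (ℓ x) * ∑ i : supp x, flagSum R ℓ (Function.update x i 0)
termination_by (supp x).card
decreasing_by
  rw [supp_update_zero]
  exact Finset.card_erase_lt_of_mem i.2

variable {ℓ : (ι → SignType) → σ}

theorem flagSum_zero : flagSum R ℓ 0 = 1 := by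
  rw [flagSum, if_pos rfl]

theorem flagSum_of_ne_zero {x : ι → SignType} (hx : x ≠ 0) :
    flagSum R ℓ x = X (ℓ x) * ∑ i ∈ supp x, flagSum R ℓ (Function.update x i 0) := by
  rw [flagSum, if_neg hx, Finset.sum_coe_sort (supp x) fun i => flagSum R ℓ (Function.update x i 0)]

theorem induction_on_update_zero {P : (ι → SignType) → Prop} (x : ι → SignType) (zero : P 0)
    (step : ∀ x, x ≠ 0 → (∀ i ∈ supp x, P (Function.update x i 0)) → P x) : P x := by
  induction hc : (supp x).card using Nat.strong_induction_on generalizing x with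
  | _ c ih =>
    rcases eq_or_ne x 0 with rfl | hx
    · exact zero
    · refine step x hx fun i hi => ih _ ?_ _ rfl
      rw [← hc, supp_update_zero]
      exact Finset.card_erase_lt_of_mem hi

theorem boundary_flagSum [CharP R 2] (x : ι → SignType) :
    boundary σ R (flagSum R ℓ x) = ∑ i ∈ supp x, flagSum R ℓ (Function.update x i 0) := by
  induction x using induction_on_update_zero with
  | zero => simp [flagSum_zero, supp]
  | step x hx ih =>
    have hcancel : ∑ i ∈ supp x, boundary σ R (flagSum R ℓ (Function.update x i 0)) = 0 := by
      rw [Finset.sum_congr rfl ih]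
      simp only [supp_update_zero]
      refine sum_sum_erase_eq_zero_of_symm _ fun i j => ?_
      rcases eq_or_ne i j with rfl | hij
      · rfl
      · rw [Function.update_comm hij]
    rw [flagSum_of_ne_zero hx, Derivation.leibniz, map_sum, hcancel, boundary_X, smul_zero,
      zero_add, smul_eq_mul, mul_one]

theorem flagSum_neg {f : σ → σ} (hf : ∀ x, x ≠ 0 → ℓ (-x) = f (ℓ x)) (x : ι → SignType) :
    flagSum R ℓ (-x) = rename f (flagSum R ℓ x) := by
  induction x using induction_on_update_zero with
  | zero => rw [neg_zero, flagSum_zero, map_one]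
  | step x hx ih =>
    rw [flagSum_of_ne_zero hx, flagSum_of_ne_zero (neg_ne_zero_iff.2 hx), supp_neg, hf x hx,
      map_mul, rename_X, map_sum]
    congr 1
    refine Finset.sum_congr rfl fun i hi => ?_
    rw [← ih i hi, Pi.neg_def, Pi.neg_def]
    congr 1
    ext j
    by_cases h : j = i <;> simp [h]

theorem pderiv_flagSum_eq_zero {u : σ} {x : ι → SignType}
    (h : ∀ y, y ≠ 0 → IsFace y x → ℓ y ≠ u) : pderiv u (flagSum R ℓ x) = 0 := by
  induction x using induction_on_update_zero with
  | zero => rw [flagSum_zero, pderiv_one]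
  | step x hx ih =>
    have hfaces : ∑ i ∈ supp x, pderiv u (flagSum R ℓ (Function.update x i 0)) = 0 :=
      Finset.sum_eq_zero fun i hi =>
        ih i hi fun y hy hyx => h y hy (hyx.trans (isFace_update_zero x i))
    rw [flagSum_of_ne_zero hx, Derivation.leibniz, map_sum, hfaces,
      pderiv_X_of_ne (h x hx (.refl x)), smul_zero, smul_zero, add_zero]

theorem pderiv_pderiv_flagSum_eq_zero {u v : σ} {x : ι → SignType}
    (h : ∀ y z, y ≠ 0 → IsFace y z → IsFace z x → ¬(ℓ y = u ∧ ℓ z = v) ∧ ¬(ℓ y = v ∧ ℓ z = u)) :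
    pderiv u (pderiv v (flagSum R ℓ x)) = 0 := by
  classical
  induction x using induction_on_update_zero with
  | zero => rw [flagSum_zero, pderiv_one, map_zero]
  | step x hx ih =>
    set S := ∑ i ∈ supp x, flagSum R ℓ (Function.update x i 0) with hS
    have hface : ∀ {y i}, IsFace y (Function.update x i 0) → IsFace y x := fun hy =>
      hy.trans (isFace_update_zero x _)
    have huv : pderiv u (pderiv v S) = 0 := by
      rw [hS, map_sum, map_sum]
      exact Finset.sum_eq_zero fun i hi =>
        ih i hi fun y z hy hyz hzx => h y z hy hyz (hface hzx)
    have hu : pderiv v (X (ℓ x)) * pderiv u S = 0 := by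
      by_cases hxv : ℓ x = v
      · rw [hS, map_sum, Finset.sum_eq_zero, mul_zero]
        exact fun i _ => pderiv_flagSum_eq_zero fun y hy hyx hyu =>
          (h y x hy (hface hyx) (.refl x)).1 ⟨hyu, hxv⟩
      · rw [pderiv_X_of_ne hxv, zero_mul]
    have hv : pderiv u (X (ℓ x)) * pderiv v S = 0 := by
      by_cases hxu : ℓ x = u
      · rw [hS, map_sum, Finset.sum_eq_zero, mul_zero]
        exact fun i _ => pderiv_flagSum_eq_zero fun y hy hyx hyv =>
          (h y x hy (hface hyx) (.refl x)).2 ⟨hyv, hxu⟩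
      · rw [pderiv_X_of_ne hxu, zero_mul]
    have hX : pderiv u (pderiv v (X (ℓ x) : MvPolynomial σ R)) = 0 := by
      rw [pderiv_X, Pi.single_apply]
      split_ifs <;> simp
    rw [flagSum_of_ne_zero hx, ← hS, pderiv_mul, map_add, pderiv_mul, pderiv_mul, hX, huv, hu, hv]
    ring

end Flag

section Hemisphere

variable {ι : Type*} [Fintype ι] [LinearOrder ι]

/-- The faces of full dimension of the coordinate sphere spanned by the coordinates before `j`. -/
def sphere (j : ι) : Finset (ι → SignType) := {x | ∀ i, x i ≠ 0 ↔ i < j}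

/-- The faces of full dimension of the upper hemisphere, in the direction of `j`, of the
coordinate sphere spanned by the coordinates up to `j`. -/
def hemisphere (j : ι) : Finset (ι → SignType) := {x | (∀ i, x i ≠ 0 ↔ i ≤ j) ∧ x j = 1}

theorem mem_sphere {j : ι} {x : ι → SignType} : x ∈ sphere j ↔ ∀ i, x i ≠ 0 ↔ i < j := by
  simp [sphere]

theorem mem_hemisphere {j : ι} {x : ι → SignType} :
    x ∈ hemisphere j ↔ (∀ i, x i ≠ 0 ↔ i ≤ j) ∧ x j = 1 := by
  simp [hemisphere]

theorem sphere_bot [OrderBot ι] : sphere (⊥ : ι) = {0} := by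
  ext x
  simp [mem_sphere, funext_iff]

theorem sum_sphere_of_covBy {M : Type*} [AddCommMonoid M] {i j : ι} (hij : i ⋖ j)
    (f : (ι → SignType) → M) :
    ∑ x ∈ sphere j, f x = ∑ x ∈ hemisphere i, f x + ∑ x ∈ hemisphere i, f (-x) := by
  have hlt : ∀ a, a < j ↔ a ≤ i := fun a => hij.lt_iff_le_left
  rw [← Finset.sum_filter_add_sum_filter_not (sphere j) fun x => x i = 1]
  congr 1
  · refine Finset.sum_congr (Finset.ext fun x => ?_) fun x _ => rfl
    simp [mem_sphere, mem_hemisphere, hlt]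
  · refine Finset.sum_nbij' Neg.neg Neg.neg (fun x hx => ?_) (fun x hx => ?_)
      (fun x _ => neg_neg x) (fun x _ => neg_neg x) fun x _ => by rw [neg_neg]
    · simp only [Finset.mem_filter, mem_sphere, mem_hemisphere, hlt] at hx ⊢
      have hi : x i ≠ 0 := (hx.1 i).2 le_rfl
      refine ⟨fun a => by simpa using hx.1 a, ?_⟩
      rw [Pi.neg_apply, ((x i).trichotomy.resolve_right (not_or.2 ⟨hi, hx.2⟩)), neg_neg]
    · simp only [Finset.mem_filter, mem_sphere, mem_hemisphere, hlt] at hx ⊢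
      exact ⟨fun a => by simpa using hx.1 a, by simp [hx.2]⟩

theorem sum_hemisphere_update_zero_of_lt {A : Type*} [CommRing A] [CharP A 2] {i j : ι}
    (hij : i < j) (f : (ι → SignType) → A) :
    ∑ x ∈ hemisphere j, f (Function.update x i 0) = 0 := by
  refine Finset.sum_involution (fun x _ => Function.update x i (-x i)) (fun x _ => ?_)
    (fun x hx _ h => ?_) (fun x hx => ?_) fun x _ => by simp
  · rw [Function.update_idem, CharTwo.add_self_eq_zero]
  · have hxi : -x i = x i := by simpa using congrFun h i
    exact (mem_hemisphere.1 hx).1 i |>.2 hij.le (SignType.neg_eq_self_iff.1 hxi)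
  · obtain ⟨hsupp, hj⟩ := mem_hemisphere.1 hx
    refine mem_hemisphere.2 ⟨fun a => ?_, by rwa [Function.update_of_ne hij.ne']⟩
    rw [← hsupp a]
    rcases eq_or_ne a i with rfl | ha
    · simp
    · rw [Function.update_of_ne ha]

theorem sum_hemisphere_update_zero_self {M : Type*} [AddCommMonoid M] (j : ι)
    (f : (ι → SignType) → M) :
    ∑ x ∈ hemisphere j, f (Function.update x j 0) = ∑ x ∈ sphere j, f x := by
  refine Finset.sum_nbij' (fun x => Function.update x j 0) (fun x => Function.update x j 1)
    (fun x hx => mem_sphere.2 fun i => ?_) (fun x hx => mem_hemisphere.2 ⟨fun i => ?_, by simp⟩)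
    (fun x hx => ?_) (fun x hx => ?_) fun x _ => rfl
  · rcases eq_or_ne i j with rfl | hi
    · simp
    · rw [Function.update_of_ne hi, (mem_hemisphere.1 hx).1, hi.le_iff_lt]
  · rcases eq_or_ne i j with rfl | hi
    · simp
    · rw [Function.update_of_ne hi, mem_sphere.1 hx, hi.le_iff_lt]
  · rw [Function.update_idem, Function.update_eq_self_iff, (mem_hemisphere.1 hx).2]
  · have hj : x j = 0 := by simpa using (mem_sphere.1 hx j).not
    rw [Function.update_idem, Function.update_eq_self_iff, hj]

theorem boundary_sum_hemisphere {σ R : Type*} [CommRing R] [CharP R 2] (ℓ : (ι → SignType) → σ)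
    (j : ι) :
    boundary σ R (∑ x ∈ hemisphere j, flagSum R ℓ x) = ∑ x ∈ sphere j, flagSum R ℓ x := by
  have hsupp : ∀ x ∈ hemisphere j, supp x = Finset.univ.filter (· ≤ j) := fun x hx => by
    ext i
    simp [mem_supp, (mem_hemisphere.1 hx).1]
  calc boundary σ R (∑ x ∈ hemisphere j, flagSum R ℓ x)
    _ = ∑ i with i ≤ j, ∑ x ∈ hemisphere j, flagSum R ℓ (Function.update x i 0) := by
      rw [Finset.sum_comm, map_sum]
      exact Finset.sum_congr rfl fun x hx => by rw [boundary_flagSum, hsupp x hx]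
    _ = ∑ x ∈ hemisphere j, flagSum R ℓ (Function.update x j 0) :=
      Finset.sum_eq_single_of_mem j (by simp) fun i hi hij =>
        sum_hemisphere_update_zero_of_lt (lt_of_le_of_ne (by simpa using hi) hij) _
    _ = ∑ x ∈ sphere j, flagSum R ℓ x := sum_hemisphere_update_zero_self ..

end Hemisphere

theorem octahedral_tucker {n : ℕ} (ℓ : (Fin (n + 1) → SignType) → Fin n × Bool)
    (hℓ : ∀ x, x ≠ 0 → ℓ (-x) = antipode (ℓ x)) :
    ∃ x y, x ≠ 0 ∧ IsFace x y ∧ ℓ y = antipode (ℓ x) := by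
  by_contra! hcon
  have hneg : ∀ x, flagSum (ZMod 2) ℓ (-x) = rename antipode (flagSum (ZMod 2) ℓ x) :=
    flagSum_neg hℓ
  refine not_antipodal_hemispheres (R := ZMod 2)
    (c := fun j => ∑ x ∈ hemisphere j, flagSum (ZMod 2) ℓ x) (fun j i => ?_) 0 ?_ fun j => ?_
  · rw [map_sum, map_sum]
    refine Finset.sum_eq_zero fun x _ => pderiv_pderiv_flagSum_eq_zero fun y z hy hyz _ => ?_
    refine ⟨fun h => hcon y z hy hyz ?_, fun h => hcon y z hy hyz ?_⟩ <;> rw [h.1, h.2] <;> rfl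
  · rw [boundary_sum_hemisphere, ← bot_eq_zero, sphere_bot, Finset.sum_singleton, flagSum_zero]
    simp
  · have hj : j.castSucc ⋖ j.succ := Fin.covBy_iff.2 (Order.covBy_add_one j.val)
    rw [boundary_sum_hemisphere, sum_sphere_of_covBy hj]
    simp only [hneg, map_sum]

section Covering

variable {n : ℕ}

/-- Of each pair of opposite nonzero sign vectors exactly one is positive. -/
def IsPositive (x : Fin n → SignType) : Prop :=
  toLex (-x) < toLex x

theorem isPositive_neg_iff {x : Fin n → SignType} (hx : x ≠ 0) :
    IsPositive (-x) ↔ ¬IsPositive x := by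
  have hne : toLex x ≠ toLex (-x) := fun h => hx <| funext fun i =>
    SignType.self_eq_neg_iff.1 (congrFun (toLex.injective h) i)
  rw [IsPositive, IsPositive, neg_neg]
  exact ⟨lt_asymm, hne.lt_or_gt.resolve_right⟩

theorem exists_isFace_apply_eq_apply_neg (f : (Fin (n + 1) → SignType) → Fin n) :
    ∃ x y, x ≠ 0 ∧ x ≠ y ∧ IsFace x y ∧ f x = f (-y) := by
  classical
  -- The label of a nonzero vector is read off from the positive one among it and its opposite.
  obtain ⟨x, y, hx, hxy, hlabel⟩ := octahedral_tucker
    (fun x => if IsPositive x then (f x, true) else (f (-x), false)) fun x hx => by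
      by_cases h : IsPositive x <;> simp [isPositive_neg_iff hx, h, antipode]
  have hne : x ≠ y := by
    rintro rfl
    split_ifs at hlabel <;> simp [antipode] at hlabel
  by_cases hxp : IsPositive x <;> by_cases hyp : IsPositive y <;>
    simp only [hxp, hyp, if_true, if_false, antipode, Prod.map_apply, Prod.mk.injEq, id,
      Bool.not_true, Bool.not_false, and_true, reduceCtorEq, and_false] at hlabel
  · exact ⟨x, y, hx, hne, hxy, hlabel.symm⟩
  · refine ⟨-x, -y, neg_ne_zero_iff.2 hx, fun h => hne (neg_injective h), hxy.neg, ?_⟩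
    rw [neg_neg, hlabel]

/-- A combinatorial Lusternik–Schnirelmann theorem. Vectors with at most `k` zeros are labelled by a
set containing them, the other ones by the size of their support, which increases along faces. -/
theorem exists_isFace_mem_neg_mem {k : ℕ} {A : Fin k → Set (Fin n → SignType)}
    (hA : ∀ x, n ≤ (supp x).card + k → ∃ i, x ∈ A i) :
    ∃ i x y, n ≤ (supp x).card + k ∧ IsFace x y ∧ x ∈ A i ∧ -y ∈ A i := by
  classical
  rcases le_or_gt n k with hnk | hkn
  · obtain ⟨i, hi⟩ := hA 0 (hnk.trans (Nat.le_add_left ..))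
    exact ⟨i, 0, 0, hnk.trans (Nat.le_add_left ..), .refl 0, hi, by rwa [neg_zero]⟩
  obtain ⟨m, rfl⟩ := Nat.exists_eq_add_one_of_ne_zero (Nat.ne_zero_of_lt hkn)
  have hcard : (supp (1 : Fin (m + 1) → SignType)).card = m + 1 := by simp [supp]
  obtain ⟨i₀, -⟩ := hA 1 (by omega)
  have : Nonempty (Fin k) := ⟨i₀⟩
  choose! g hg using hA
  obtain ⟨x, y, hx, hne, hxy, hf⟩ := exists_isFace_apply_eq_apply_neg fun x =>
    if h : m + 1 ≤ (supp x).card + k then (g x).castLE (Nat.le_of_lt_succ hkn)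
    else ⟨k + (supp x).card - 1, by have := i₀.2; omega⟩
  have hpos : 0 < (supp x).card := Finset.card_pos.2 <| Finset.nonempty_iff_ne_empty.2 <|
    supp_eq_empty.not.2 hx
  have hle : (supp x).card < (supp y).card := hxy.card_supp_lt hne
  by_cases hbig : m + 1 ≤ (supp x).card + k
  · have hbig' : m + 1 ≤ (supp (-y)).card + k := by rw [supp_neg]; omega
    rw [dif_pos hbig, dif_pos hbig', Fin.castLE_inj] at hf
    exact ⟨g x, x, y, hbig, hxy, hg x hbig, hf ▸ hg (-y) hbig'⟩
  · have hlt := (g (-y)).2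
    have hneg := congrArg Finset.card (supp_neg y)
    rw [dif_neg hbig, Fin.ext_iff] at hf
    split_ifs at hf <;> simp only [Fin.val_castLE] at hf <;> omega

end Covering

end OctahedralTucker

/-! ### Rounding in F-spaces -/

namespace FSpaceNorm

variable {Y : Type*} [AddCommGroup Y] [Module ℝ Y] (F : FSpaceNorm Y)

theorem norm_zero : F.norm 0 = 0 :=
  (F.eq_zero_iff 0).2 rfl

theorem norm_sub_le (y z : Y) : F.norm (y - z) ≤ F.norm y + F.norm z := by
  rw [sub_eq_add_neg, ← F.neg z]
  exact F.add_le ..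

theorem norm_sum_le {ι : Type*} (s : Finset ι) (f : ι → Y) :
    F.norm (∑ i ∈ s, f i) ≤ ∑ i ∈ s, F.norm (f i) :=
  Finset.le_sum_of_subadditive _ F.norm_zero.le F.add_le s f

theorem norm_le_norm_nsmul {r : ℕ} (hr : r ≠ 0) (y : Y) : F.norm y ≤ F.norm (r • y) := by
  have hr' : (1 : ℝ) ≤ r := by exact_mod_cast Nat.one_le_iff_ne_zero.2 hr
  have hinv : |(r : ℝ)⁻¹| ≤ 1 := by
    rw [abs_of_nonneg (by positivity)]
    exact inv_le_one_of_one_le₀ hr'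
  have h := F.smul_le (r : ℝ)⁻¹ ((r : ℝ) • y) hinv
  rwa [inv_smul_smul₀ (by positivity), Nat.cast_smul_eq_nsmul] at h

theorem norm_sign_smul_le (s : SignType) (y : Y) : F.norm ((s : ℝ) • y) ≤ F.norm y :=
  F.smul_le _ _ (by cases s <;> simp)

variable {F} {u : ℕ → Y}

theorem exists_embedding_norm_sub_le {n : ℕ} {c : Fin n → Y} {ε : ℝ}
    (hc : ∀ j, ∃ i, F.norm (u j - c i) ≤ ε) :
    ∃ e : ℕ ↪ ℕ, ∀ i j, F.norm (u (e i) - u (e j)) ≤ 2 * ε := by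
  choose col hcol using hc
  obtain ⟨y, hy⟩ := Finite.exists_infinite_fiber col
  refine ⟨(Infinite.natEmbedding (col ⁻¹' {y})).trans (.subtype _), fun i j => ?_⟩
  have hnear : ∀ a : col ⁻¹' {y}, F.norm (u a - c y) ≤ ε := fun a => by
    simpa only [show col a = y from a.2] using hcol a
  have hsub := F.norm_sub_le (u (Infinite.natEmbedding (col ⁻¹' {y}) i) - c y)
    (u (Infinite.natEmbedding (col ⁻¹' {y}) j) - c y)
  rw [sub_sub_sub_cancel_right] at hsub
  simp only [Function.Embedding.trans_apply, Function.Embedding.subtype_apply]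
  linarith [hnear (Infinite.natEmbedding _ i), hnear (Infinite.natEmbedding _ j)]

theorem exists_norm_sum_Ico_le {n : ℕ} {c : Fin n → Y} {ε : ℝ}
    (hc : ∀ q, ∃ i, F.norm (∑ j ∈ Finset.range q, u j - c i) ≤ ε) :
    ∃ p q, p < q ∧ q ≤ n ∧ F.norm (∑ j ∈ Finset.Ico p q, u j) ≤ 2 * ε := by
  choose col hcol using hc
  obtain ⟨a, b, hab, hcolab⟩ :=
    Fintype.exists_ne_map_eq_of_card_lt (fun q : Fin (n + 1) => col q) (by simp)
  wlog hlt : a < b generalizing a b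
  · exact this b a hab.symm hcolab.symm (lt_of_le_of_ne (not_lt.1 hlt) hab.symm)
  refine ⟨a, b, hlt, Nat.lt_succ_iff.1 b.2, ?_⟩
  have hsub := F.norm_sub_le (∑ j ∈ Finset.range b, u j - c (col b))
    (∑ j ∈ Finset.range a, u j - c (col a))
  rw [← hcolab, sub_sub_sub_cancel_right, ← Finset.sum_Ico_eq_sub _ hlt.le] at hsub
  have hb := hcol b
  rw [← hcolab] at hb
  linarith [hcol a]

/-- Otherwise infinitely many of the terms would be large and close to each other, so that their
partial sums would spread out. -/
theorem exists_norm_le_of_totallyBounded_sums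
    (h : ∀ ε > 0, ∃ (n : ℕ) (c : Fin n → Y),
      ∀ t : Finset ℕ, ∃ i, F.norm (∑ j ∈ t, u j - c i) ≤ ε)
    {η : ℝ} (hη : 0 < η) : ∃ n, F.norm (u n) ≤ η := by
  obtain ⟨n, c, hc⟩ := h (η / 4) (by positivity)
  obtain ⟨n', c', hc'⟩ := h (η / (4 * (n + 1))) (by positivity)
  obtain ⟨e, he⟩ := exists_embedding_norm_sub_le fun j => by simpa using hc' {j}
  obtain ⟨p, q, hpq, hqn, hblock⟩ := exists_norm_sum_Ico_le (u := u ∘ e) fun q => by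
    simpa using hc ((Finset.range q).map e)
  refine ⟨e p, (F.norm_le_norm_nsmul (Nat.sub_ne_zero_of_lt hpq) _).trans ?_⟩
  have hsplit : (q - p) • u (e p) =
      ∑ j ∈ Finset.Ico p q, (u ∘ e) j + ∑ j ∈ Finset.Ico p q, (u (e p) - u (e j)) := by
    simp [Finset.sum_sub_distrib]
  have hclose : F.norm (∑ j ∈ Finset.Ico p q, (u (e p) - u (e j))) ≤ η / 2 :=
    calc F.norm (∑ j ∈ Finset.Ico p q, (u (e p) - u (e j)))
      _ ≤ (Finset.Ico p q).card • (2 * (η / (4 * (n + 1)))) :=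
        (F.norm_sum_le ..).trans (Finset.sum_le_card_nsmul _ _ _ fun j _ => he p j)
      _ ≤ (n + 1) * (2 * (η / (4 * (n + 1)))) := by
        rw [Nat.card_Ico, nsmul_eq_mul]
        gcongr
        exact_mod_cast (Nat.sub_le q p).trans (hqn.trans n.le_succ)
      _ = η / 2 := by
        field_simp
        norm_num
  rw [hsplit]
  linarith [F.add_le (∑ j ∈ Finset.Ico p q, (u ∘ e) j)
    (∑ j ∈ Finset.Ico p q, (u (e p) - u (e j)))]

end FSpaceNorm

section Rounding

open OctahedralTucker

variable {Y : Type*} [AddCommGroup Y] [Module ℝ Y]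

/-- The combination of the vectors `v i` with coefficients the signs `x i`. -/
def signedSum {ι : Type*} [Fintype ι] (v : ι → Y) (x : ι → SignType) : Y :=
  ∑ i, (x i : ℝ) • v i

theorem signedSum_neg {ι : Type*} [Fintype ι] (v : ι → Y) (x : ι → SignType) :
    signedSum v (-x) = -signedSum v x := by
  simp [signedSum, SignType.coe_neg]

variable (F : FSpaceNorm Y) {m k : ℕ} {v : Fin m → Y} {ρ δ : ℝ}

theorem norm_signedSum_le (hv : ∀ i, F.norm (v i) ≤ ρ) (x : Fin m → SignType) :
    F.norm (signedSum v x) ≤ m * ρ := by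
  simpa [signedSum] using (F.norm_sum_le Finset.univ fun i => (x i : ℝ) • v i).trans
    (Finset.sum_le_card_nsmul _ _ ρ fun i _ => (F.norm_sign_smul_le ..).trans (hv i))

theorem norm_signedSum_sub_le (hρ : 0 ≤ ρ) (hv : ∀ i, F.norm (v i) ≤ ρ) {x y : Fin m → SignType}
    (hxy : IsFace x y) (hx : m ≤ (supp x).card + k) :
    F.norm (signedSum v y - signedSum v x) ≤ k * ρ := by
  have hcard : (supp x)ᶜ.card ≤ k := by
    rw [Finset.card_compl, Fintype.card_fin]
    omega
  calc F.norm (signedSum v y - signedSum v x)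
    _ = F.norm (∑ i ∈ (supp x)ᶜ, (y i : ℝ) • v i) := by
      rw [signedSum, signedSum, ← Finset.sum_compl_add_sum (supp x) fun i => (y i : ℝ) • v i,
        ← Finset.sum_subset (supp x).subset_univ fun i _ hi => ?_, add_sub_assoc,
        ← Finset.sum_sub_distrib, Finset.sum_eq_zero (s := supp x) fun i hi => ?_, add_zero]
      · rw [hxy i (mem_supp.1 hi), sub_self]
      · simp only [mem_supp, not_not] at hi
        simp [hi]
    _ ≤ ∑ i ∈ (supp x)ᶜ, F.norm (v i) :=
      (F.norm_sum_le ..).trans (Finset.sum_le_sum fun i _ => F.norm_sign_smul_le ..)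
    _ ≤ (supp x)ᶜ.card • ρ := Finset.sum_le_card_nsmul _ _ _ fun i _ => hv i
    _ ≤ k * ρ := by rw [nsmul_eq_mul]; gcongr

theorem exists_signs_norm_signedSum_le (hρ : 0 ≤ ρ) (hv : ∀ i, F.norm (v i) ≤ ρ) {c : Fin k → Y}
    (hc : ∀ x, ∃ j, F.norm (signedSum v x - c j) ≤ δ) :
    ∃ θ : Fin m → SignType, (∀ i, θ i ≠ 0) ∧ F.norm (signedSum v θ) ≤ 2 * δ + 2 * (k * ρ) := by
  classical
  obtain ⟨j, x, y, hx, hxy, hxj, hyj⟩ :=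
    exists_isFace_mem_neg_mem (A := fun j => {x | F.norm (signedSum v x - c j) ≤ δ}) fun x _ => hc x
  have hdouble : F.norm (2 • signedSum v x) ≤ 2 * δ + k * ρ := by
    have hsplit : 2 • signedSum v x = (signedSum v x - c j) - (signedSum v (-y) - c j)
        - (signedSum v y - signedSum v x) := by
      rw [signedSum_neg]
      module
    rw [hsplit]
    linarith [F.norm_sub_le (signedSum v x - c j - (signedSum v (-y) - c j))
      (signedSum v y - signedSum v x), F.norm_sub_le (signedSum v x - c j)
      (signedSum v (-y) - c j), norm_signedSum_sub_le F hρ hv hxy hx, hxj.out, hyj.out]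
  let θ : Fin m → SignType := fun i => if x i = 0 then 1 else x i
  have hθ : IsFace x θ := fun i hi => if_neg hi
  refine ⟨θ, fun i => ?_, ?_⟩
  · by_cases h : x i = 0 <;> simp [θ, h]
  · have hsum := F.add_le (signedSum v x) (signedSum v θ - signedSum v x)
    rw [add_sub_cancel] at hsum
    linarith [norm_signedSum_sub_le F hρ hv hθ hx, F.norm_le_norm_nsmul two_ne_zero (signedSum v x)]

end Rounding

/-! ### Signs -/

section Signs

variable {Ω : Type*} [MeasurableSpace Ω] {μ : Measure Ω} {ι : Type*} {x : ι → Ω → ℝ}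
  {P : ι → Set Ω}

namespace IsSign

theorem abs_le_one {z : Ω → ℝ} (hz : IsSign z) (ω : Ω) : |z ω| ≤ 1 := by
  rcases hz.2 ω with h | h | h <;> simp [h]

theorem isSignOn_support {z : Ω → ℝ} (hz : IsSign z) : IsSignOn z (Function.support z) :=
  ⟨hz, rfl⟩

theorem indicator {z : Ω → ℝ} (hz : IsSign z) {A : Set Ω} (hA : MeasurableSet A) :
    IsSign (A.indicator z) := by
  refine ⟨hz.1.indicator hA, fun ω => ?_⟩
  by_cases h : ω ∈ A
  · simpa [h] using hz.2 ω
  · simp [h]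

theorem sign_smul {z : Ω → ℝ} (hz : IsSign z) (s : SignType) : IsSign ((s : ℝ) • z) := by
  refine ⟨hz.1.const_smul _, fun ω => ?_⟩
  rcases hz.2 ω with h | h | h <;> cases s <;> simp [h]

theorem mem {z : Ω → ℝ} (hz : IsSign z) (X : KotheFSpace Ω μ) : X.Mem z :=
  X.solid_mem z _ hz.1 X.one_mem fun ω => by simpa using hz.abs_le_one ω

theorem integrable [IsFiniteMeasure μ] {z : Ω → ℝ} (hz : IsSign z) : Integrable z μ :=
  .of_bound hz.1.aestronglyMeasurable 1 (.of_forall hz.abs_le_one)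

end IsSign

theorem IsSignOn.sum {t : Finset ι} (hx : ∀ i ∈ t, IsSignOn (x i) (P i))
    (hP : (t : Set ι).PairwiseDisjoint P) : IsSignOn (∑ i ∈ t, x i) (⋃ i ∈ t, P i) := by
  have hmem {i} (hi : i ∈ t) {ω} : ω ∈ P i ↔ x i ω ≠ 0 := by
    rw [← (hx i hi).2, Function.mem_support]
  have heq {i ω} (hi : i ∈ t) (hω : ω ∈ P i) : (∑ j ∈ t, x j) ω = x i ω := by
    rw [Finset.sum_apply]
    refine Finset.sum_eq_single_of_mem i hi fun j hj hji => ?_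
    by_contra hne
    exact (hP hj hi hji).notMem_of_mem_left ((hmem hj).2 hne) hω
  have hzero {ω} (hω : ω ∉ ⋃ i ∈ t, P i) : (∑ j ∈ t, x j) ω = 0 := by
    rw [Finset.sum_apply]
    refine Finset.sum_eq_zero fun j hj => ?_
    by_contra hne
    exact hω (Set.mem_biUnion hj ((hmem hj).2 hne))
  refine ⟨⟨?_, fun ω => ?_⟩, ?_⟩
  · simpa only [Finset.sum_fn] using Finset.measurable_sum t fun i hi => (hx i hi).1.1
  · by_cases hω : ω ∈ ⋃ i ∈ t, P i
    · obtain ⟨i, hi, hωi⟩ := Set.mem_iUnion₂.1 hω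
      exact heq hi hωi ▸ (hx i hi).1.2 ω
    · exact .inr (.inl (hzero hω))
  · ext ω
    refine ⟨not_imp_comm.1 hzero, fun hω => ?_⟩
    obtain ⟨i, hi, hωi⟩ := Set.mem_iUnion₂.1 hω
    exact Function.mem_support.2 (heq hi hωi ▸ (hmem hi).1 hωi)

theorem isSign_signedSum [Fintype ι] (hx : ∀ i, IsSignOn (x i) (P i))
    (hP : Pairwise (Function.onFun Disjoint P)) (θ : ι → SignType) : IsSign (signedSum x θ) := by
  have hsupp i : Function.support ((θ i : ℝ) • x i) ⊆ P i :=
    (Function.support_const_smul_subset ..).trans (hx i).2.subset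
  exact (IsSignOn.sum (fun i _ => ((hx i).1.sign_smul (θ i)).isSignOn_support)
    fun i _ j _ hij => (hP hij).mono (hsupp i) (hsupp j)).1

theorem isMeanZeroSignOn_signedSum [IsFiniteMeasure μ] [Fintype ι]
    (hx : ∀ i, IsMeanZeroSignOn μ (x i) (P i)) (hP : Pairwise (Function.onFun Disjoint P))
    {θ : ι → SignType} (hθ : ∀ i, θ i ≠ 0) : IsMeanZeroSignOn μ (signedSum x θ) (⋃ i, P i) := by
  have hsign i : IsSignOn ((θ i : ℝ) • x i) (P i) := by
    have hne : (θ i : ℝ) ≠ 0 := by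
      cases h : θ i <;> simp_all
    exact ⟨(hx i).1.1.sign_smul _,
      (Function.support_const_smul_of_ne_zero _ _ hne).trans (hx i).1.2⟩
  refine ⟨?_, ?_⟩
  · simpa [signedSum] using IsSignOn.sum (fun i _ => hsign i) fun i (_ : i ∈ Finset.univ) j _ hij =>
      hP hij
  · simp only [signedSum, Finset.sum_apply]
    rw [integral_finsetSum _ fun i _ => (hsign i).1.integrable]
    refine Finset.sum_eq_zero fun i _ => ?_
    simp only [Pi.smul_apply, smul_eq_mul, integral_const_mul, (hx i).2, mul_zero]

end Signs

section DisjointSequences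

variable {Ω : Type*}

theorem exists_disjoint_seq {Q G : Set Ω → Prop} {A : Set Ω} (hA : Q A)
    (h : ∀ R, Q R → ∃ B ⊆ R, G B ∧ Q (R \ B)) :
    ∃ f : ℕ → Set Ω, Pairwise (Function.onFun Disjoint f) ∧ ∀ n, f n ⊆ A ∧ G (f n) := by
  choose B hBR hG hQ using h
  let R : ℕ → {R // Q R} := Nat.rec ⟨A, hA⟩ fun _ R => ⟨R.1 \ B R.1 R.2, hQ R.1 R.2⟩
  have hanti : Antitone fun n => (R n).1 := antitone_nat_of_succ_le fun n => Set.sdiff_subset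
  refine ⟨fun n => B (R n).1 (R n).2, (pairwise_disjoint_on _).2 fun i j hij => ?_,
    fun n => ⟨(hBR ..).trans (hanti n.zero_le), hG ..⟩⟩
  have hj : B (R j).1 (R j).2 ⊆ (R i).1 \ B (R i).1 (R i).2 :=
    (hBR ..).trans (hanti (Nat.succ_le_of_lt hij))
  exact Set.disjoint_sdiff_right.mono_right hj

variable [MeasurableSpace Ω] {μ : Measure Ω}

theorem Atomless.exists_split [IsFiniteMeasure μ] (hμ : Atomless μ) {A : Set Ω}
    (hA : MeasurableSet A) (hpos : 0 < μ A) :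
    ∃ B ⊆ A, (MeasurableSet B ∧ 0 < μ B) ∧ MeasurableSet (A \ B) ∧ 0 < μ (A \ B) := by
  obtain ⟨B, hBA, hB, hBpos, hlt⟩ := hμ A hA hpos
  refine ⟨B, hBA, ⟨hB, hBpos⟩, hA.diff hB, ?_⟩
  rw [measure_sdiff hBA hB.nullMeasurableSet (measure_ne_top μ B)]
  exact tsub_pos_of_lt hlt

end DisjointSequences

/-! ### Operators with relatively compact image of the signs -/

theorem KotheFSpace.sum_mem {Ω : Type*} [MeasurableSpace Ω] {μ : Measure Ω}
    (X : KotheFSpace Ω μ) {ι : Type*} {t : Finset ι} {x : ι → Ω → ℝ}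
    (hx : ∀ i ∈ t, X.Mem (x i)) : X.Mem (∑ i ∈ t, x i) :=
  Finset.sum_induction x X.Mem X.add_mem (by simpa using X.smul_mem 0 _ X.one_mem) hx

namespace KOperator

variable {Ω : Type*} [MeasurableSpace Ω] {μ : Measure Ω} {X : KotheFSpace Ω μ} {Y : Type*}
  [AddCommGroup Y] [Module ℝ Y] {FY : FSpaceNorm Y} {T : KOperator X Y FY} {A : Set Ω} {δ η : ℝ}

theorem map_sum (T : KOperator X Y FY) {ι : Type*} (t : Finset ι) {x : ι → Ω → ℝ}
    (hx : ∀ i ∈ t, X.Mem (x i)) : T.toFun (∑ i ∈ t, x i) = ∑ i ∈ t, T.toFun (x i) := by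
  classical
  induction t using Finset.induction_on with
  | empty => simpa using T.map_smul 0 _ X.one_mem
  | insert a s ha ih =>
    rw [Finset.forall_mem_insert] at hx
    rw [Finset.sum_insert ha, Finset.sum_insert ha, T.map_add _ _ hx.1 (X.sum_mem hx.2), ih hx.2]

theorem map_signedSum (T : KOperator X Y FY) {ι : Type*} [Fintype ι] {x : ι → Ω → ℝ}
    (hx : ∀ i, X.Mem (x i)) (θ : ι → SignType) :
    T.toFun (signedSum x θ) = signedSum (fun i => T.toFun (x i)) θ := by
  rw [signedSum, T.map_sum _ fun i _ => X.smul_mem _ _ (hx i)]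
  exact Finset.sum_congr rfl fun i _ => T.map_smul _ _ (hx i)

theorem map_indicator_add_map_indicator_compl (T : KOperator X Y FY) {x : Ω → ℝ} (hx : IsSign x)
    (hA : MeasurableSet A) : T.toFun (A.indicator x) + T.toFun (Aᶜ.indicator x) = T.toFun x := by
  rw [← T.map_add _ _ ((hx.indicator hA).mem X) ((hx.indicator hA.compl).mem X),
    Set.indicator_self_add_compl]

/-- All signs supported in `A` have image of norm at most `δ`. -/
def SmallOn (T : KOperator X Y FY) (δ : ℝ) (A : Set Ω) : Prop :=
  ∀ x, IsSign x → Function.support x ⊆ A → FY.norm (T.toFun x) ≤ δ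

theorem SmallOn.mono {B : Set Ω} (h : T.SmallOn δ A) (hB : B ⊆ A) : T.SmallOn δ B :=
  fun x hx hxB => h x hx (hxB.trans hB)

theorem SmallOn.norm_indicator_le {x : Ω → ℝ} {E : Set Ω} (h : T.SmallOn δ A) (hx : IsSign x)
    (hE : MeasurableSet E) (hA : Function.support x ∩ E ⊆ A) :
    FY.norm (T.toFun (E.indicator x)) ≤ δ :=
  h _ (hx.indicator hE) (by rwa [Set.support_indicator, Set.inter_comm])

theorem SmallOn.union {δ' : ℝ} {B : Set Ω} (hA : T.SmallOn δ A) (hB : T.SmallOn δ' B)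
    (hAm : MeasurableSet A) : T.SmallOn (δ + δ') (A ∪ B) := by
  intro x hx hxs
  rw [← T.map_indicator_add_map_indicator_compl hx hAm]
  exact (FY.add_le ..).trans (add_le_add
    (hA.norm_indicator_le hx hAm Set.inter_subset_right)
    (hB.norm_indicator_le hx hAm.compl fun ω hω => (hxs hω.1).resolve_left hω.2))

theorem RelCompactSigns.exists_smallOn_of_pairwise_disjoint (hc : T.RelCompactSigns) (hη : 0 < η)
    {f : ℕ → Set Ω} (hf : Pairwise (Function.onFun Disjoint f)) : ∃ n, T.SmallOn η (f n) := by
  by_contra! hcon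
  simp only [SmallOn, not_forall, not_le, exists_prop] at hcon
  choose x hx hxf hlarge using hcon
  have hsum (t : Finset ℕ) : IsSign (∑ n ∈ t, x n) :=
    (IsSignOn.sum (fun n _ => (hx n).isSignOn_support)
      fun i _ j _ hij => (hf hij).mono (hxf i) (hxf j)).1
  obtain ⟨n, hn⟩ := FSpaceNorm.exists_norm_le_of_totallyBounded_sums (F := FY)
    (u := fun n => T.toFun (x n)) (fun ε hε => by
      obtain ⟨k, c, hkc⟩ := hc ε hε
      exact ⟨k, c, fun t => T.map_sum t (fun n _ => (hx n).mem X) ▸ hkc _ (hsum t)⟩) hη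
  exact (hlarge n).not_ge hn

/-- `A` is covered by finitely many measurable sets on each of which `T` is `δ`-small. -/
def Fine (T : KOperator X Y FY) (δ : ℝ) (A : Set Ω) : Prop :=
  ∃ S : Set (Set Ω), S.Finite ∧ (∀ P ∈ S, MeasurableSet P ∧ T.SmallOn δ P) ∧ A ⊆ ⋃₀ S

theorem SmallOn.fine (h : T.SmallOn δ A) (hA : MeasurableSet A) : T.Fine δ A :=
  ⟨{A}, Set.finite_singleton A, by simpa using ⟨hA, h⟩, by simp⟩

theorem Fine.union {B : Set Ω} (hA : T.Fine δ A) (hB : T.Fine δ B) : T.Fine δ (A ∪ B) := by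
  obtain ⟨S, hS, hSδ, hAS⟩ := hA
  obtain ⟨S', hS', hSδ', hBS'⟩ := hB
  refine ⟨S ∪ S', hS.union hS', fun P hP => hP.elim (hSδ P) (hSδ' P), ?_⟩
  rw [Set.sUnion_union]
  exact Set.union_subset_union hAS hBS'

theorem Fine.exists_pairwise_disjoint (h : T.Fine δ A) (hA : MeasurableSet A) :
    ∃ (m : ℕ) (P : Fin m → Set Ω), (∀ i, MeasurableSet (P i) ∧ T.SmallOn δ (P i)) ∧
      Pairwise (Function.onFun Disjoint P) ∧ ⋃ i, P i = A := by
  obtain ⟨S, hS, hSδ, hAS⟩ := h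
  obtain ⟨m, P, -, rfl⟩ := hS.fin_param
  rw [Set.forall_mem_range] at hSδ
  refine ⟨m, fun i => A ∩ disjointed P i, fun i => ⟨hA.inter ?_, ?_⟩, fun i j hij => ?_, ?_⟩
  · exact disjointedRec (fun _ j ht => ht.diff (hSδ j).1) (hSδ i).1
  · exact (hSδ i).2.mono (Set.inter_subset_right.trans (disjointed_subset P i))
  · exact (disjoint_disjointed P hij).mono Set.inter_subset_right Set.inter_subset_right
  · rw [← Set.inter_iUnion, iUnion_disjointed, Set.inter_eq_left, ← Set.sUnion_range]
    exact hAS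

/-- Otherwise sets on which `T` is not `η`-small could be split off forever. -/
theorem exists_not_fine_forall_smallOn_inter_or_sdiff (hc : T.RelCompactSigns) (hη : 0 < η)
    (hA : MeasurableSet A) (hfine : ¬T.Fine δ A) :
    ∃ R, MeasurableSet R ∧ ¬T.Fine δ R ∧
      ∀ E, MeasurableSet E → T.SmallOn η (R ∩ E) ∨ T.SmallOn η (R \ E) := by
  by_contra! hcon
  obtain ⟨f, hf, hfη⟩ := exists_disjoint_seq (G := fun B => ¬T.SmallOn η B)
    (Q := fun R => MeasurableSet R ∧ ¬T.Fine δ R) ⟨hA, hfine⟩ fun R ⟨hR, hRfine⟩ => by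
      obtain ⟨E, hE, hinter, hdiff⟩ := hcon R hR hRfine
      by_cases hfineInter : T.Fine δ (R ∩ E)
      · refine ⟨R ∩ E, Set.inter_subset_left, hinter, hR.diff (hR.inter hE), fun hfineDiff => ?_⟩
        exact hRfine (by simpa using hfineInter.union hfineDiff)
      · exact ⟨R \ E, Set.sdiff_subset, hdiff, by simpa using ⟨hR.inter hE, hfineInter⟩⟩
  obtain ⟨n, hn⟩ := hc.exists_smallOn_of_pairwise_disjoint hη hf
  exact (hfη n).2 hn

/-- One of `x - z` and `x + z` is supported where `T` is small. -/
theorem norm_le_norm_add_of_support_eq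
    (hA : ∀ E, MeasurableSet E → T.SmallOn η (A ∩ E) ∨ T.SmallOn η (A \ E))
    {x z : Ω → ℝ} (hx : IsSign x) (hz : IsSign z) (hxz : Function.support x = Function.support z)
    (hzA : Function.support z ⊆ A) : FY.norm (T.toFun z) ≤ FY.norm (T.toFun x) + 2 * η := by
  let E : Set Ω := {ω | x ω = z ω}
  have hE : MeasurableSet E := measurableSet_eq_fun hx.1 hz.1
  have hx_eq : x = E.indicator z + (-1 : ℝ) • Eᶜ.indicator z := by
    funext ω
    by_cases hω : x ω = z ω
    · simp [E, hω]
    · have hsupp : x ω ≠ 0 ↔ z ω ≠ 0 := Set.ext_iff.1 hxz ω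
      rcases hx.2 ω with h | h | h <;> rcases hz.2 ω with h' | h' | h' <;> simp_all [E]
  have hTz := T.map_indicator_add_map_indicator_compl hz hE
  have hTx : T.toFun x = T.toFun (E.indicator z) - T.toFun (Eᶜ.indicator z) := by
    have hmem := (hz.indicator hE.compl).mem X
    rw [hx_eq, T.map_add _ _ ((hz.indicator hE).mem X) (X.smul_mem _ _ hmem),
      T.map_smul _ _ hmem, neg_one_smul, sub_eq_add_neg]
  have hsum_le (y : Y) : FY.norm (y + y) ≤ 2 * FY.norm y := by linarith [FY.add_le y y]
  rcases hA E hE with hsmall | hsmall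
  · have hu := hsmall.norm_indicator_le hz hE (Set.inter_subset_inter_left _ hzA)
    rw [← hTz, show T.toFun (E.indicator z) + T.toFun (Eᶜ.indicator z) =
      T.toFun (E.indicator z) + T.toFun (E.indicator z) - T.toFun x by rw [hTx]; abel]
    linarith [FY.norm_sub_le (T.toFun (E.indicator z) + T.toFun (E.indicator z)) (T.toFun x),
      hsum_le (T.toFun (E.indicator z))]
  · have hw := hsmall.norm_indicator_le hz hE.compl fun ω hω => ⟨hzA hω.1, hω.2⟩
    rw [← hTz, show T.toFun (E.indicator z) + T.toFun (Eᶜ.indicator z) =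
      T.toFun x + (T.toFun (Eᶜ.indicator z) + T.toFun (Eᶜ.indicator z)) by rw [hTx]; abel]
    linarith [FY.add_le (T.toFun x) (T.toFun (Eᶜ.indicator z) + T.toFun (Eᶜ.indicator z)),
      hsum_le (T.toFun (Eᶜ.indicator z))]

variable [IsFiniteMeasure μ]

theorem RelCompactSigns.exists_disjoint_seq_smallOn (hc : T.RelCompactSigns) (hμ : Atomless μ)
    (hA : MeasurableSet A) (hpos : 0 < μ A) (hη : 0 < η) :
    ∃ f : ℕ → Set Ω, Pairwise (Function.onFun Disjoint f) ∧
      ∀ n, f n ⊆ A ∧ (MeasurableSet (f n) ∧ 0 < μ (f n)) ∧ T.SmallOn η (f n) := by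
  have hpositive {R : Set Ω} (hR : MeasurableSet R ∧ 0 < μ R) :
      ∃ f : ℕ → Set Ω, Pairwise (Function.onFun Disjoint f) ∧
        ∀ n, f n ⊆ R ∧ MeasurableSet (f n) ∧ 0 < μ (f n) :=
    exists_disjoint_seq (Q := fun R => MeasurableSet R ∧ 0 < μ R) hR fun R hR =>
      hμ.exists_split hR.1 hR.2
  refine exists_disjoint_seq (Q := fun R => MeasurableSet R ∧ 0 < μ R)
    (G := fun B => (MeasurableSet B ∧ 0 < μ B) ∧ T.SmallOn η B) ⟨hA, hpos⟩ fun R hR => ?_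
  obtain ⟨B, hBR, hB, -, hdiff⟩ := hμ.exists_split hR.1 hR.2
  obtain ⟨f, hf, hfB⟩ := hpositive hB
  obtain ⟨n, hn⟩ := hc.exists_smallOn_of_pairwise_disjoint hη hf
  exact ⟨f n, (hfB n).1.trans hBR, ⟨(hfB n).2, hn⟩, hR.1.diff (hfB n).2.1,
    hdiff.trans_le (measure_mono (Set.sdiff_subset_sdiff_right (hfB n).1))⟩

theorem Narrow.fine (hn : T.Narrow) (hc : T.RelCompactSigns) (hμ : Atomless μ)
    (hA : MeasurableSet A) (hpos : 0 < μ A) (hδ : 0 < δ) : T.Fine δ A := by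
  by_contra hfine
  have hη : 0 < δ / 5 := by positivity
  obtain ⟨R, hR, hRfine, hdich⟩ :=
    exists_not_fine_forall_smallOn_inter_or_sdiff hc hη hA hfine
  obtain ⟨z, hz, hzR, hzδ⟩ : ∃ z, IsSign z ∧ Function.support z ⊆ R ∧ δ < FY.norm (T.toFun z) := by
    simpa only [SmallOn, not_forall, not_le, exists_prop] using mt (SmallOn.fine · hR) hRfine
  -- The support of `z` may be null, so narrowness is applied to its union with `f 0`.
  obtain ⟨f, -, hf⟩ := hc.exists_disjoint_seq_smallOn hμ hA hpos hη
  obtain ⟨-, ⟨hB, hBpos⟩, hBsmall⟩ := hf 0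
  have hzm : MeasurableSet (Function.support z) := measurableSet_support hz.1
  obtain ⟨x, ⟨⟨hx, hxs⟩, -⟩, hxη⟩ := hn (Function.support z ∪ f 0) (hzm.union hB)
    (hBpos.trans_le (measure_mono Set.subset_union_right)) (δ / 5) hη
  have hrest : FY.norm (T.toFun ((Function.support z)ᶜ.indicator x)) ≤ δ / 5 :=
    hBsmall.norm_indicator_le hx hzm.compl fun ω hω => (hxs.subset hω.1).resolve_left hω.2
  have hsupp : Function.support ((Function.support z).indicator x) = Function.support z := by
    rw [Set.support_indicator, hxs, Set.inter_eq_left]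
    exact Set.subset_union_left
  have hsub := FY.norm_sub_le (T.toFun x) (T.toFun ((Function.support z)ᶜ.indicator x))
  rw [← T.map_indicator_add_map_indicator_compl hx hzm, add_sub_cancel_right,
    T.map_indicator_add_map_indicator_compl hx hzm] at hsub
  linarith [norm_le_norm_add_of_support_eq hdich (hx.indicator hzm) hz hsupp hzR]

/-- Small sets of positive measure are added to the pieces, which may be null. -/
theorem Narrow.exists_partition (hn : T.Narrow) (hc : T.RelCompactSigns) (hμ : Atomless μ)
    (hA : MeasurableSet A) (hpos : 0 < μ A) (hδ : 0 < δ) :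
    ∃ (m : ℕ) (P : Fin m → Set Ω),
      (∀ i, (MeasurableSet (P i) ∧ 0 < μ (P i)) ∧ T.SmallOn δ (P i)) ∧
      Pairwise (Function.onFun Disjoint P) ∧ ⋃ i, P i = A := by
  obtain ⟨m, D, hDδ, hD, hDA⟩ := (hn.fine hc hμ hA hpos (half_pos hδ)).exists_pairwise_disjoint hA
  obtain ⟨g, hg, hgA⟩ := hc.exists_disjoint_seq_smallOn hμ hA hpos (half_pos hδ)
  let U : Set Ω := ⋃ i : Fin m, g i
  have hU : MeasurableSet U := .iUnion fun i => (hgA i).2.1.1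
  have hgU (i : Fin m) : g i ⊆ U := Set.subset_iUnion (fun i : Fin m => g i) i
  refine ⟨m, fun i => (D i \ U) ∪ g i, fun i => ⟨⟨?_, ?_⟩, ?_⟩, fun i j hij => ?_, ?_⟩
  · exact ((hDδ i).1.diff hU).union (hgA i).2.1.1
  · exact (hgA i).2.1.2.trans_le (measure_mono Set.subset_union_right)
  · exact add_halves δ ▸ ((hDδ i).2.mono Set.sdiff_subset).union (hgA i).2.2 ((hDδ i).1.diff hU)
  · refine .union_left (.union_right ?_ ?_) (.union_right ?_ ?_)
    · exact (hD hij).mono Set.sdiff_subset Set.sdiff_subset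
    · exact Set.disjoint_sdiff_left.mono_right (hgU j)
    · exact Set.disjoint_sdiff_right.mono_left (hgU i)
    · exact hg (Fin.val_injective.ne hij)
  · rw [Set.iUnion_union_distrib, ← Set.iUnion_sdiff, hDA]
    exact Set.sdiff_union_of_subset (Set.iUnion_subset fun i => (hgA i).1)

end KOperator

theorem stmt_8_general {Ω : Type*} [MeasurableSpace Ω] (μ : Measure Ω)
    [IsFiniteMeasure μ] (hμ : Atomless μ)
    (X : KotheFSpace Ω μ) (Y : Type*) [AddCommGroup Y] [Module ℝ Y]
    (FY : FSpaceNorm Y)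
    (T₁ T₂ : KOperator X Y FY)
    (h₁ : T₁.Narrow) (h₂ : T₂.Narrow) (h₂cpt : T₂.RelCompactSigns) :
    ∀ A : Set Ω, MeasurableSet A → 0 < μ A → ∀ ε > (0 : ℝ),
      ∃ x : Ω → ℝ, IsMeanZeroSignOn μ x A ∧
        FY.norm (T₁.toFun x + T₂.toFun x) < ε := by
  intro A hA hpos ε hε
  obtain ⟨k, c, hc⟩ := h₂cpt (ε / 8) (by positivity)
  obtain ⟨m, P, hP, hdisj, rfl⟩ := h₂.exists_partition h₂cpt hμ hA hpos
    (δ := ε / (8 * (k + 1))) (by positivity)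
  choose x hx hx₁ using fun i => h₁ (P i) (hP i).1.1 (hP i).1.2 (ε / (2 * (m + 1))) (by positivity)
  have hmem i : X.Mem (x i) := (hx i).1.1.mem X
  obtain ⟨θ, hθ, hT₂⟩ := exists_signs_norm_signedSum_le FY (v := fun i => T₂.toFun (x i))
    (by positivity) (fun i => (hP i).2 _ (hx i).1.1 (hx i).1.2.subset)
    fun θ => T₂.map_signedSum hmem θ ▸ hc _ (isSign_signedSum (fun i => (hx i).1) hdisj θ)
  refine ⟨signedSum x θ, isMeanZeroSignOn_signedSum hx hdisj hθ, ?_⟩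
  have hT₁ := norm_signedSum_le FY (fun i => (hx₁ i).le) θ
  rw [← T₁.map_signedSum hmem] at hT₁
  rw [← T₂.map_signedSum hmem] at hT₂
  have hε₁ : m * (ε / (2 * (m + 1))) < ε / 2 := by
    rw [← div_div, mul_div_assoc', div_lt_iff₀ (by positivity)]
    linarith
  have hε₂ : k * (ε / (8 * (k + 1))) ≤ ε / 8 := by
    rw [← div_div, mul_div_assoc', div_le_iff₀ (by positivity)]
    linarith
  linarith [FY.add_le (T₁.toFun (signedSum x θ)) (T₂.toFun (signedSum x θ))]

/-- Theorem 5.2: if `Y` has a transfinite basis, `T₁` is narrow and `T₂` is narrow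
with `T₂(Z)` relatively compact, then `T₁ + T₂` is narrow. -/
theorem stmt_8 {Ω : Type*} [MeasurableSpace Ω] (μ : Measure Ω)
    [IsFiniteMeasure μ] (hμ : Atomless μ)
    (X : KotheFSpace Ω μ) (Y : Type*) [AddCommGroup Y] [Module ℝ Y]
    (FY : FSpaceNorm Y)
    (I : Type*) [LinearOrder I] (B : TransfiniteBasis FY I)
    (T₁ T₂ : KOperator X Y FY)
    (h₁ : T₁.Narrow) (h₂ : T₂.Narrow) (h₂cpt : T₂.RelCompactSigns) :
    ∀ A : Set Ω, MeasurableSet A → 0 < μ A → ∀ ε > (0 : ℝ),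
      ∃ x : Ω → ℝ, IsMeanZeroSignOn μ x A ∧
        FY.norm (T₁.toFun x + T₂.toFun x) < ε :=
  stmt_8_general μ hμ X Y FY T₁ T₂ h₁ h₂ h₂cpt
end

section
/- Let (Ω, Σ, μ) be a finite atomless measure space, X a Köthe F-space on (Ω, Σ, μ), Z the set of all signs in X, Y a locally convex F-space, T_1 : X → Y a continuous linear narrow operator, and T_2 : X → Y a continuous linear narrow operator such that T_2(Z) is relatively compact in Y. Then T_1 + T_2 is narrow. -/
open MeasureTheory

/-!
Evaluating an operator on indicators gives a finitely additive set function, so narrowness of a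
real functional `φ` says that every set of positive measure splits into two pieces of almost equal
charge. If `φ` is moreover bounded on signs, an approximate Hahn decomposition followed by repeated
halving cuts any set into finitely many pieces on all of whose subsets the charge is small. On such
pieces a sign that is almost killed by a narrow `T` automatically has a small `φ`-value, and gluing
the signs of the pieces, with `±` chosen so that the `φ`-values cancel, keeps that value small.
Hence `(T, φ)` is narrow, and so is `(T, φ₁, …, φₙ)`. By Hahn–Banach, finitely many continuous
functionals control a neighbourhood of zero on a totally bounded set, which brings the pair of
operators `(T₁, T₂)` down to this case; the sum is the image of the pair under addition.
-/

section Contents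

open Set

variable {Ω : Type*} {C : Set (Set Ω)} {ν : AddContent ℝ C} {A B : Set Ω} {c δ η : ℝ}

/-- The content `-ν`. -/
def negContent (ν : AddContent ℝ C) : AddContent ℝ C where
  toFun s := -ν s
  empty' := by simp
  sUnion' I hI hdisj hmem := by simp [addContent_sUnion hI hdisj hmem]

lemma negContent_apply (ν : AddContent ℝ C) (s : Set Ω) : negContent ν s = -ν s := rfl

lemma addContent_eq_add_sdiff (hC : IsSetRing C) (ν : AddContent ℝ C) (hA : A ∈ C) (hB : B ∈ C)
    (hBA : B ⊆ A) : ν A = ν B + ν (A \ B) := by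
  rw [← addContent_union hC hB (hC.sdiff_mem hA hB) disjoint_sdiff_right, union_sdiff_cancel hBA]

variable [MeasurableSpace Ω] {μ : Measure Ω}

/-- The content `ν` splits evenly along `μ`: every set of positive `μ`-measure is the disjoint union
of two sets of positive `μ`-measure with almost the same content. It is the set-function form of
narrowness of a real functional. -/
def SplitsEvenly (μ : Measure Ω) (ν : AddContent ℝ C) : Prop :=
  ∀ A ∈ C, 0 < μ A → ∀ ε > (0 : ℝ),
    ∃ B ∈ C, B ⊆ A ∧ 0 < μ B ∧ 0 < μ (A \ B) ∧ |ν B - ν (A \ B)| < ε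

namespace SplitsEvenly

lemma neg (hν : SplitsEvenly μ ν) : SplitsEvenly μ (negContent ν) := by
  intro A hA hμA ε hε
  obtain ⟨B, hB, hBA, hμB, hμAB, hlt⟩ := hν A hA hμA ε hε
  refine ⟨B, hB, hBA, hμB, hμAB, ?_⟩
  rwa [negContent_apply, negContent_apply, neg_sub_neg, abs_sub_comm]

lemma le_two_mul_of_forall_pos_sdiff (hν : SplitsEvenly μ ν) (hC : IsSetRing C) (hA : A ∈ C)
    (hμA : 0 < μ A) (h : ∀ D ∈ C, D ⊆ A → 0 < μ (A \ D) → ν D ≤ c) (hB : B ∈ C) (hBA : B ⊆ A) :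
    ν B ≤ 2 * c := by
  obtain ⟨Q, hQ, hQA, hμQ, hμAQ, -⟩ := hν A hA hμA 1 one_pos
  have h_inter : ν (B ∩ Q) ≤ c :=
    h _ (hC.inter_mem hB hQ) (inter_subset_left.trans hBA)
      (hμAQ.trans_le (measure_mono (sdiff_subset_sdiff_right inter_subset_right)))
  have h_sdiff : ν (B \ Q) ≤ c :=
    h _ (hC.sdiff_mem hB hQ) (sdiff_subset.trans hBA)
      (hμQ.trans_le (measure_mono fun ω hω => ⟨hQA hω, fun hωB => hωB.2 hω⟩))
  have h_add := addContent_eq_add_sdiff hC ν hB (hC.inter_mem hB hQ) inter_subset_left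
  rw [sdiff_self_inter] at h_add
  linarith

lemma exists_almost_maximal (hν : SplitsEvenly μ ν) (hbdd : BddAbove (ν '' C)) (hA : A ∈ C)
    (hμA : 0 < μ A) (hη : 0 < η) :
    ∃ P ∈ C, P ⊆ A ∧ 0 < μ P ∧ 0 < μ (A \ P) ∧
      ∀ B ∈ C, B ⊆ A → 0 < μ B → 0 < μ (A \ B) → ν B ≤ ν P + η := by
  set S : Set (Set Ω) := {B | B ∈ C ∧ B ⊆ A ∧ 0 < μ B ∧ 0 < μ (A \ B)}
  obtain ⟨B₀, hB₀, hB₀A, hμB₀, hμAB₀, -⟩ := hν A hA hμA 1 one_pos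
  have hS : (ν '' S).Nonempty := ⟨_, B₀, ⟨hB₀, hB₀A, hμB₀, hμAB₀⟩, rfl⟩
  have hSbdd : BddAbove (ν '' S) := hbdd.mono (image_mono fun B hB => hB.1)
  obtain ⟨_, ⟨P, ⟨hP, hPA, hμP, hμAP⟩, rfl⟩, hlt⟩ :=
    exists_lt_of_lt_csSup hS (sub_lt_self (sSup (ν '' S)) hη)
  refine ⟨P, hP, hPA, hμP, hμAP, fun B hB hBA hμB hμAB => ?_⟩
  have := le_csSup hSbdd (mem_image_of_mem ν (show B ∈ S from ⟨hB, hBA, hμB, hμAB⟩))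
  linarith

lemma exists_approx_hahn_decomposition (hν : SplitsEvenly μ ν) (hC : IsSetRing C)
    (hbdd : BddAbove (ν '' C)) (hA : A ∈ C) (hμA : 0 < μ A) (hη : 0 < η) :
    ∃ P ∈ C, P ⊆ A ∧ 0 < μ P ∧ 0 < μ (A \ P) ∧
      (∀ B ∈ C, B ⊆ P → -η ≤ ν B) ∧ ∀ B ∈ C, B ⊆ A \ P → ν B ≤ η := by
  obtain ⟨P, hP, hPA, hμP, hμAP, hmax⟩ := hν.exists_almost_maximal hbdd hA hμA (half_pos hη)
  refine ⟨P, hP, hPA, hμP, hμAP, fun B hB hBP => ?_, fun B hB hBAP => ?_⟩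
  · have h_small : ∀ D ∈ C, D ⊆ P → 0 < μ (P \ D) → negContent ν D ≤ η / 2 := by
      intro D hD hDP hμPD
      have h_max := hmax (P \ D) (hC.sdiff_mem hP hD) (sdiff_subset.trans hPA) hμPD
        (hμAP.trans_le (measure_mono (sdiff_subset_sdiff_right sdiff_subset)))
      have h_add := addContent_eq_add_sdiff hC ν hP hD hDP
      rw [negContent_apply]
      linarith
    have := hν.neg.le_two_mul_of_forall_pos_sdiff hC hP hμP h_small hB hBP
    rw [negContent_apply] at this
    linarith
  · have h_small : ∀ D ∈ C, D ⊆ A \ P → 0 < μ ((A \ P) \ D) → ν D ≤ η / 2 := by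
      intro D hD hDAP hμD
      have h_max := hmax (P ∪ D) (hC.union_mem hP hD)
        (union_subset hPA (hDAP.trans sdiff_subset))
        (hμP.trans_le (measure_mono subset_union_left)) (by rwa [← sdiff_sdiff])
      have h_add := addContent_union (m := ν) hC hP hD (disjoint_sdiff_right.mono_right hDAP)
      linarith
    have := hν.le_two_mul_of_forall_pos_sdiff hC (hC.sdiff_mem hA hP) hμAP h_small hB hBAP
    linarith

variable {G : Set Ω → Prop}

lemma induction_on_of_almost_nonneg (hν : SplitsEvenly μ ν) (hC : IsSetRing C)
    (hη : 0 < η)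
    (union : ∀ A ∈ C, ∀ B ∈ C, Disjoint A B → G A → G B → G (A ∪ B))
    (small : ∀ A ∈ C, 0 < μ A → (∀ B ∈ C, B ⊆ A → |ν B| ≤ 3 * η) → G A)
    (hA : A ∈ C) (hμA : 0 < μ A) (hneg : ∀ B ∈ C, B ⊆ A → -η ≤ ν B) : G A := by
  -- The invariant `ν A ≤ (2 ^ n + 1) * η` is chosen so that both halves satisfy it for `n - 1`.
  have key : ∀ n : ℕ, ∀ A ∈ C, 0 < μ A → (∀ B ∈ C, B ⊆ A → -η ≤ ν B) →
      ν A ≤ (2 ^ n + 1) * η → G A := by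
    intro n
    induction n with
    | zero =>
      intro A hA hμA hneg hle
      refine small A hA hμA fun B hB hBA => abs_le.2 ?_
      have h_add := addContent_eq_add_sdiff hC ν hA hB hBA
      have h_sdiff := hneg (A \ B) (hC.sdiff_mem hA hB) sdiff_subset
      constructor <;> linarith [hneg B hB hBA]
    | succ n ih =>
      intro A hA hμA hneg hle
      obtain ⟨B, hB, hBA, hμB, hμAB, hlt⟩ := hν A hA hμA η hη
      have hAB : A \ B ∈ C := hC.sdiff_mem hA hB
      have h_add := addContent_eq_add_sdiff hC ν hA hB hBA
      rw [abs_lt] at hlt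
      rw [pow_succ] at hle
      have hGB : G B := ih B hB hμB (fun D hD hDB => hneg D hD (hDB.trans hBA)) (by linarith)
      have hGAB : G (A \ B) :=
        ih (A \ B) hAB hμAB (fun D hD hDAB => hneg D hD (hDAB.trans sdiff_subset)) (by linarith)
      exact union_sdiff_cancel hBA ▸ union B hB (A \ B) hAB disjoint_sdiff_right hGB hGAB
  obtain ⟨n, hn⟩ := pow_unbounded_of_one_lt (ν A / η) one_lt_two
  rw [div_lt_iff₀ hη] at hn
  exact key n A hA hμA hneg (by linarith)

theorem induction_on (hν : SplitsEvenly μ ν) (hC : IsSetRing C) (hbdd : BddAbove (ν '' C))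
    (hδ : 0 < δ)
    (union : ∀ A ∈ C, ∀ B ∈ C, Disjoint A B → G A → G B → G (A ∪ B))
    (small : ∀ A ∈ C, 0 < μ A → (∀ B ∈ C, B ⊆ A → |ν B| ≤ δ) → G A)
    (hA : A ∈ C) (hμA : 0 < μ A) : G A := by
  obtain ⟨η, hη, rfl⟩ : ∃ η > 0, δ = 3 * η := ⟨δ / 3, by positivity, by ring⟩
  obtain ⟨P, hP, hPA, hμP, hμAP, hPneg, hAPpos⟩ :=
    hν.exists_approx_hahn_decomposition hC hbdd hA hμA hη
  have hAP : A \ P ∈ C := hC.sdiff_mem hA hP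
  have hGP : G P := hν.induction_on_of_almost_nonneg hC hη union small hP hμP hPneg
  have hGAP : G (A \ P) :=
    hν.neg.induction_on_of_almost_nonneg hC hη union
      (fun B hB hμB h => small B hB hμB fun D hD hDB => by
        simpa only [negContent_apply, abs_neg] using h D hD hDB)
      hAP hμAP (fun B hB hBAP => neg_le_neg (hAPpos B hB hBAP))
  exact union_sdiff_cancel hPA ▸ union P hP (A \ P) hAP disjoint_sdiff_right hGP hGAP

end SplitsEvenly

end Contents

section Signs

open Set

variable {Ω : Type*} [MeasurableSpace Ω] {μ : Measure Ω} {A B : Set Ω} {x y : Ω → ℝ}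

lemma isSign_zero : IsSign (0 : Ω → ℝ) :=
  ⟨measurable_zero, fun _ => Or.inr (Or.inl rfl)⟩

lemma isSign_indicator_one (hB : MeasurableSet B) : IsSign (B.indicator (1 : Ω → ℝ)) := by
  refine ⟨measurable_one.indicator hB, fun ω => ?_⟩
  by_cases h : ω ∈ B <;> simp [h]

lemma IsSign.neg (hx : IsSign x) : IsSign (-x) := by
  refine ⟨hx.1.neg, fun ω => ?_⟩
  rcases hx.2 ω with h | h | h <;> simp [h]

lemma IsSign.abs_le_one_s9 (hx : IsSign x) (ω : Ω) : |x ω| ≤ 1 := by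
  rcases hx.2 ω with h | h | h <;> simp [h]

lemma IsSign.mem_s9 (hx : IsSign x) (X : KotheFSpace Ω μ) : X.Mem x :=
  X.solid_mem x _ hx.1 X.one_mem fun ω => by simpa using hx.abs_le_one_s9 ω

lemma IsSign.integrable_s9 [IsFiniteMeasure μ] (hx : IsSign x) : Integrable x μ :=
  Integrable.of_bound hx.1.aestronglyMeasurable 1 (ae_of_all μ hx.abs_le_one_s9)

namespace IsSignOn

lemma measurableSet (hx : IsSignOn x A) : MeasurableSet A :=
  hx.2 ▸ measurableSet_support hx.1.1

lemma measurableSet_preimage_one (hx : IsSignOn x A) : MeasurableSet (x ⁻¹' {1}) :=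
  hx.1.1 (measurableSet_singleton 1)

lemma preimage_one_subset (hx : IsSignOn x A) : x ⁻¹' {1} ⊆ A := by
  rw [← hx.2]
  intro ω (hω : x ω = 1)
  simp [hω]

lemma indicator_sub_indicator (hx : IsSignOn x A) :
    (x ⁻¹' {1}).indicator 1 - (A \ x ⁻¹' {1}).indicator 1 = x := by
  ext ω
  rw [← hx.2]
  rcases hx.1.2 ω with h | h | h <;> norm_num [indicator, h]

lemma neg (hx : IsSignOn x A) : IsSignOn (-x) A :=
  ⟨hx.1.neg, by rw [Function.support_neg, hx.2]⟩

lemma add (hx : IsSignOn x A) (hy : IsSignOn y B) (hAB : Disjoint A B) :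
    IsSignOn (x + y) (A ∪ B) := by
  have h_zero : ∀ ω, x ω = 0 ∨ y ω = 0 := by
    intro ω
    by_contra! h
    exact disjoint_left.1 hAB (hx.2.subset h.1) (hy.2.subset h.2)
  refine ⟨⟨hx.1.1.add hy.1.1, fun ω => ?_⟩, ?_⟩
  · rcases h_zero ω with h | h
    · simpa [h] using hy.1.2 ω
    · simpa [h] using hx.1.2 ω
  · ext ω
    rw [← hx.2, ← hy.2]
    rcases h_zero ω with h | h <;> simp [h]

end IsSignOn

namespace IsMeanZeroSignOn

lemma neg (hx : IsMeanZeroSignOn μ x A) : IsMeanZeroSignOn μ (-x) A :=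
  ⟨hx.1.neg, by rw [integral_neg', hx.2, neg_zero]⟩

lemma add [IsFiniteMeasure μ] (hx : IsMeanZeroSignOn μ x A) (hy : IsMeanZeroSignOn μ y B)
    (hAB : Disjoint A B) : IsMeanZeroSignOn μ (x + y) (A ∪ B) :=
  ⟨hx.1.add hy.1 hAB,
    by rw [integral_add' hx.1.1.integrable_s9 hy.1.1.integrable_s9, hx.2, hy.2, add_zero]⟩

lemma measure_preimage_one [IsFiniteMeasure μ] (hx : IsMeanZeroSignOn μ x A) :
    μ (x ⁻¹' {1}) = μ (A \ x ⁻¹' {1}) := by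
  have hB := hx.1.measurableSet_preimage_one
  have hAB := hx.1.measurableSet.diff hB
  have h := hx.2
  rw [← hx.1.indicator_sub_indicator, integral_sub' (isSign_indicator_one hB).integrable_s9
    (isSign_indicator_one hAB).integrable_s9, integral_indicator_one hB, integral_indicator_one hAB,
    sub_eq_zero] at h
  exact (measureReal_eq_measureReal_iff).1 h

lemma measure_preimage_one_pos [IsFiniteMeasure μ] (hx : IsMeanZeroSignOn μ x A) (hA : 0 < μ A) :
    0 < μ (x ⁻¹' {1}) := by
  refine pos_iff_ne_zero.2 fun h => hA.ne' ?_
  rw [← measure_sdiff_null h, ← hx.measure_preimage_one, h]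

end IsMeanZeroSignOn

lemma isSetRing_setOf_measurableSet : IsSetRing {s : Set Ω | MeasurableSet s} where
  empty_mem := MeasurableSet.empty
  union_mem _ _ hs ht := hs.union ht
  sdiff_mem _ _ hs ht := hs.diff ht

/-- `T` is additive on signs: the only trace of linearity that narrowness arguments need. -/
def AdditiveOnSigns {Y : Type*} [Add Y] (T : (Ω → ℝ) → Y) : Prop :=
  ∀ x y, IsSign x → IsSign y → IsSign (x + y) → T (x + y) = T x + T y

namespace AdditiveOnSigns

section

variable {Y Z : Type*} [AddCommGroup Y] [AddCommGroup Z] {T : (Ω → ℝ) → Y} {S : (Ω → ℝ) → Z}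

lemma map_zero (hT : AdditiveOnSigns T) : T 0 = 0 := by
  have h := hT 0 0 isSign_zero isSign_zero (by rw [add_zero]; exact isSign_zero)
  rwa [add_zero, left_eq_add] at h

lemma map_neg (hT : AdditiveOnSigns T) (hx : IsSign x) : T (-x) = -T x := by
  have h := hT (-x) x hx.neg hx (by rw [neg_add_cancel]; exact isSign_zero)
  rw [neg_add_cancel, hT.map_zero] at h
  exact eq_neg_of_add_eq_zero_left h.symm

lemma map_sub (hT : AdditiveOnSigns T) (hx : IsSign x) (hy : IsSign y) (hxy : IsSign (x - y)) :
    T (x - y) = T x - T y := by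
  rw [sub_eq_add_neg] at hxy ⊢
  rw [hT x (-y) hx hy.neg hxy, hT.map_neg hy, sub_eq_add_neg]

lemma map_comp {F : Type*} [FunLike F Y Z] [AddMonoidHomClass F Y Z] (f : F)
    (hT : AdditiveOnSigns T) : AdditiveOnSigns (f ∘ T) :=
  fun x y hx hy hxy => (congrArg f (hT x y hx hy hxy)).trans (map_add f _ _)

lemma prodMk (hT : AdditiveOnSigns T) (hS : AdditiveOnSigns S) :
    AdditiveOnSigns fun x => (T x, S x) :=
  fun x y hx hy hxy => Prod.ext (hT x y hx hy hxy) (hS x y hx hy hxy)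

/-- The vector-valued content `s ↦ T 1ₛ` on the measurable sets. -/
noncomputable def indicatorContent (hT : AdditiveOnSigns T) :
    AddContent Y {s : Set Ω | MeasurableSet s} :=
  isSetRing_setOf_measurableSet.addContent_of_union (fun s => T (s.indicator 1))
    (by rw [indicator_empty', hT.map_zero]) fun {s t} hs ht hst => by
      have h_union : (s ∪ t).indicator (1 : Ω → ℝ) = s.indicator 1 + t.indicator 1 :=
        indicator_union_of_disjoint hst 1
      rw [h_union]
      exact hT _ _ (isSign_indicator_one hs) (isSign_indicator_one ht)
        (h_union ▸ isSign_indicator_one (hs.union ht))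

lemma map_eq_indicatorContent_sub (hT : AdditiveOnSigns T) (hx : IsSignOn x A) :
    T x = hT.indicatorContent (x ⁻¹' {1}) - hT.indicatorContent (A \ x ⁻¹' {1}) := by
  have hB := hx.measurableSet_preimage_one
  rw [← congrArg T hx.indicator_sub_indicator]
  exact hT.map_sub (isSign_indicator_one hB) (isSign_indicator_one (hx.measurableSet.diff hB))
    (hx.indicator_sub_indicator.symm ▸ hx.1)

end

variable {φ : (Ω → ℝ) → ℝ} {δ : ℝ}

lemma abs_map_le (hφ : AdditiveOnSigns φ) (hx : IsSignOn x A)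
    (hδ : ∀ B, MeasurableSet B → B ⊆ A → |hφ.indicatorContent B| ≤ δ) : |φ x| ≤ 2 * δ := by
  have hB := hx.measurableSet_preimage_one
  rw [hφ.map_eq_indicatorContent_sub hx, two_mul]
  exact (abs_sub _ _).trans (add_le_add (hδ _ hB hx.preimage_one_subset)
    (hδ _ (hx.measurableSet.diff hB) sdiff_subset))

end AdditiveOnSigns

end Signs

section Narrow

open Set Filter Topology

variable {Ω : Type*} [MeasurableSpace Ω] {μ : Measure Ω}

/-- Narrowness of a map into a topological space with a zero: every measurable set of positive
measure carries mean zero signs with image arbitrarily close to `0`. The map is only ever evaluated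
at signs, so no function space is fixed as its domain. -/
def IsNarrow {Y : Type*} [TopologicalSpace Y] [Zero Y] (μ : Measure Ω) (T : (Ω → ℝ) → Y) : Prop :=
  ∀ A, MeasurableSet A → 0 < μ A → ∀ U ∈ 𝓝 (0 : Y), ∃ x, IsMeanZeroSignOn μ x A ∧ T x ∈ U

lemma isNarrow_iff_norm_lt {Y : Type*} [SeminormedAddCommGroup Y] {T : (Ω → ℝ) → Y} :
    IsNarrow μ T ↔ ∀ A, MeasurableSet A → 0 < μ A → ∀ ε > (0 : ℝ),
      ∃ x, IsMeanZeroSignOn μ x A ∧ ‖T x‖ < ε := by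
  refine forall₃_congr fun _ _ _ => ⟨fun h ε hε => ?_, fun h U hU => ?_⟩
  · simpa only [mem_ball_zero_iff] using h _ (Metric.ball_mem_nhds 0 hε)
  · obtain ⟨ε, hε, hεU⟩ := Metric.mem_nhds_iff.1 hU
    obtain ⟨x, hx, hTx⟩ := h ε hε
    exact ⟨x, hx, hεU (mem_ball_zero_iff.2 hTx)⟩

lemma abs_add_le_or_abs_sub_le {a b r : ℝ} (ha : |a| ≤ r) (hb : |b| ≤ r) :
    |a + b| ≤ r ∨ |a - b| ≤ r := by
  grind

namespace IsNarrow

lemma comp {Y Z : Type*} [TopologicalSpace Y] [Zero Y] [TopologicalSpace Z] [Zero Z]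
    {T : (Ω → ℝ) → Y} {f : Y → Z} (hf : ContinuousAt f 0) (hf₀ : f 0 = 0) (hT : IsNarrow μ T) :
    IsNarrow μ (f ∘ T) :=
  fun A hA hμA _ hU => hT A hA hμA _ (hf.preimage_mem_nhds (hf₀.symm ▸ hU))

lemma splitsEvenly_indicatorContent [IsFiniteMeasure μ] {φ : (Ω → ℝ) → ℝ} (hφ : IsNarrow μ φ)
    (hadd : AdditiveOnSigns φ) : SplitsEvenly μ hadd.indicatorContent := by
  intro A hA hμA ε hε
  obtain ⟨x, hx, hφx⟩ := isNarrow_iff_norm_lt.1 hφ A hA hμA ε hε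
  rw [hadd.map_eq_indicatorContent_sub hx.1, Real.norm_eq_abs] at hφx
  have hμB := hx.measure_preimage_one_pos hμA
  exact ⟨x ⁻¹' {1}, hx.1.measurableSet_preimage_one, hx.1.preimage_one_subset, hμB,
    hx.measure_preimage_one ▸ hμB, hφx⟩

section TopologicalGroup

variable {Y : Type*} [AddCommGroup Y] [TopologicalSpace Y] [IsTopologicalAddGroup Y]
  {T : (Ω → ℝ) → Y}

/-- Signs on `A` and `B` can be glued with a relative sign that prevents their `φ`-values from
adding up. -/
lemma exists_isMeanZeroSignOn_union_abs_le [IsFiniteMeasure μ] {φ : (Ω → ℝ) → ℝ}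
    (hT : AdditiveOnSigns T) (hφ : AdditiveOnSigns φ) {A B : Set Ω} {δ : ℝ} (hAB : Disjoint A B)
    (hA : ∀ U ∈ 𝓝 (0 : Y), ∃ x, IsMeanZeroSignOn μ x A ∧ T x ∈ U ∧ |φ x| ≤ δ)
    (hB : ∀ U ∈ 𝓝 (0 : Y), ∃ x, IsMeanZeroSignOn μ x B ∧ T x ∈ U ∧ |φ x| ≤ δ) :
    ∀ U ∈ 𝓝 (0 : Y), ∃ x, IsMeanZeroSignOn μ x (A ∪ B) ∧ T x ∈ U ∧ |φ x| ≤ δ := by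
  intro U hU
  obtain ⟨V, hV, hVU⟩ := exists_nhds_zero_half hU
  obtain ⟨x, hx, hTx, hφx⟩ := hA V hV
  obtain ⟨y, hy, ⟨hTy, hTy'⟩, hφy⟩ := hB (V ∩ -V) (inter_mem hV (neg_mem_nhds_zero Y hV))
  have hxy := hx.add hy hAB
  have hxy' := hx.add hy.neg hAB
  rcases abs_add_le_or_abs_sub_le hφx hφy with h | h
  · refine ⟨x + y, hxy, ?_, ?_⟩
    · rw [hT x y hx.1.1 hy.1.1 hxy.1.1]
      exact hVU _ hTx _ hTy
    · rwa [hφ x y hx.1.1 hy.1.1 hxy.1.1]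
  · refine ⟨x + -y, hxy', ?_, ?_⟩
    · rw [hT x (-y) hx.1.1 hy.neg.1.1 hxy'.1.1, hT.map_neg hy.1.1]
      exact hVU _ hTx _ hTy'
    · rwa [hφ x (-y) hx.1.1 hy.neg.1.1 hxy'.1.1, hφ.map_neg hy.1.1, ← sub_eq_add_neg]

lemma prodMk_real [IsFiniteMeasure μ] {φ : (Ω → ℝ) → ℝ} (hT : IsNarrow μ T)
    (hφ : IsNarrow μ φ) (hTadd : AdditiveOnSigns T) (hφadd : AdditiveOnSigns φ)
    (hφbdd : BddAbove (φ '' {x | IsSign x})) : IsNarrow μ fun x => (T x, φ x) := by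
  intro A hA hμA W hW
  rw [Prod.zero_eq_mk, mem_nhds_prod_iff] at hW
  obtain ⟨U, hU, V, hV, hUV⟩ := hW
  obtain ⟨δ, hδ, hδV⟩ := Metric.nhds_basis_closedBall.mem_iff.1 hV
  have hbdd : BddAbove (hφadd.indicatorContent '' {s | MeasurableSet s}) := by
    refine hφbdd.mono ?_
    rintro _ ⟨s, hs, rfl⟩
    exact ⟨s.indicator 1, isSign_indicator_one hs, rfl⟩
  obtain ⟨x, hx, hTx, hφx⟩ :=
    (hφ.splitsEvenly_indicatorContent hφadd).induction_on
      (G := fun A => ∀ U ∈ 𝓝 (0 : Y), ∃ x, IsMeanZeroSignOn μ x A ∧ T x ∈ U ∧ |φ x| ≤ δ)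
      isSetRing_setOf_measurableSet hbdd (half_pos hδ)
      (fun _ _ _ _ => exists_isMeanZeroSignOn_union_abs_le hTadd hφadd)
      (fun A hA hμA h_small U hU => by
        obtain ⟨x, hx, hTx⟩ := hT A hA hμA U hU
        refine ⟨x, hx, hTx, ?_⟩
        linarith [hφadd.abs_map_le hx.1 h_small])
      hA hμA U hU
  exact ⟨x, hx, hUV ⟨hTx, hδV (mem_closedBall_zero_iff.2 hφx)⟩⟩

lemma prodMk_pi [IsFiniteMeasure μ] (hT : IsNarrow μ T) (hTadd : AdditiveOnSigns T) {n : ℕ}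
    {φ : Fin n → (Ω → ℝ) → ℝ} (hφ : ∀ i, IsNarrow μ (φ i)) (hφadd : ∀ i, AdditiveOnSigns (φ i))
    (hφbdd : ∀ i, BddAbove (φ i '' {x | IsSign x})) :
    IsNarrow μ fun x => (T x, fun i => φ i x) := by
  induction n with
  | zero =>
    convert hT.comp (f := fun y => (y, (0 : Fin 0 → ℝ))) (by fun_prop) rfl using 2 with x
    exact Prod.ext rfl (Subsingleton.elim _ _)
  | succ n ih =>
    have h_tail : IsNarrow μ fun x => (T x, fun i : Fin n => φ i.succ x) :=
      ih (fun i => hφ i.succ) (fun i => hφadd i.succ) (fun i => hφbdd i.succ)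
    have h_tail_add : AdditiveOnSigns fun x => (T x, fun i : Fin n => φ i.succ x) :=
      hTadd.prodMk fun x y hx hy hxy => funext fun i => hφadd i.succ x y hx hy hxy
    let f : (Y × (Fin n → ℝ)) × ℝ → Y × (Fin (n + 1) → ℝ) := fun p => (p.1.1, Fin.cons p.2 p.1.2)
    have hf : Continuous f := by fun_prop
    have hf₀ : f 0 = 0 := Prod.ext rfl (funext (Fin.cases rfl fun _ => rfl))
    convert (h_tail.prodMk_real (hφ 0) h_tail_add (hφadd 0) (hφbdd 0)).comp hf.continuousAt hf₀
      using 2 with x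
    exact Prod.ext rfl (funext (Fin.cases rfl fun _ => rfl))

end TopologicalGroup

end IsNarrow

end Narrow

section NormingFunctionals

open Set Filter Topology

lemma exists_strongDual_eq_seminorm {E : Type*} [AddCommGroup E] [Module ℝ E] [TopologicalSpace E]
    [PolynormableSpace ℝ E] {p : Seminorm ℝ E} (hp : Continuous p) (c : E) :
    ∃ f : StrongDual ℝ E, f c = p c ∧ ∀ y, |f y| ≤ p y := by
  rcases eq_or_ne c 0 with rfl | hc
  · exact ⟨0, by simp, by simp⟩
  let coord := LinearEquiv.coord ℝ E c hc
  have h_smul : ∀ x, coord x • c = x := LinearEquiv.coord_apply_smul ℝ E c hc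
  obtain ⟨f, hf, hfp⟩ := Module.Dual.exists_continuous_extension_of_le_seminorm_real
    (Submodule.span ℝ {c}) (p c • coord.toLinearMap) hp fun x => by
      have hx : p x = |coord x| * p c := by
        rw [← Real.norm_eq_abs, ← map_smul_eq_mul, h_smul]
      rw [hx, mul_comm]
      exact mul_le_mul_of_nonneg_left (le_abs_self _) (apply_nonneg p c)
  refine ⟨f, ?_, hfp⟩
  have hfc := hf ⟨c, Submodule.mem_span_singleton_self c⟩
  rwa [LinearMap.smul_apply, LinearEquiv.coe_coe, LinearEquiv.coord_self, smul_eq_mul, mul_one]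
    at hfc

variable {Y : Type*} [AddCommGroup Y] [Module ℝ Y]

lemma exists_continuous_seminorm_ball_subset [TopologicalSpace Y] [PolynormableSpace ℝ Y]
    {U : Set Y} (hU : U ∈ 𝓝 0) : ∃ p : Seminorm ℝ Y, Continuous p ∧ ∃ r > 0, p.ball 0 r ⊆ U := by
  have := (PolynormableSpace.withSeminorms ℝ Y).topologicalAddGroup
  obtain ⟨s, r, hr, hsr⟩ := ((PolynormableSpace.withSeminorms ℝ Y).mem_nhds_iff 0 U).1 hU
  exact ⟨_, Seminorm.continuous_finsetSup fun p _ => p.2, r, hr, hsr⟩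

/-- The functionals norm the points of a finite net of `K`, hence almost norm every point of `K`. -/
lemma exists_inter_preimage_subset_of_totallyBounded [UniformSpace Y] [IsUniformAddGroup Y]
    [PolynormableSpace ℝ Y] {K U : Set Y} (hK : TotallyBounded K) (hU : U ∈ 𝓝 0) :
    ∃ (n : ℕ) (F : Y →L[ℝ] Fin n → ℝ), ∃ V ∈ 𝓝 0, K ∩ F ⁻¹' V ⊆ U := by
  obtain ⟨p, hp, r, hr, hpU⟩ := exists_continuous_seminorm_ball_subset hU
  obtain ⟨t, ht, hKt⟩ := totallyBounded_iff_subset_finite_iUnion_nhds_zero.1 hK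
    (p.ball 0 (r / 3)) (p.ball_mem_nhds hp (by positivity))
  obtain ⟨n, c, -, rfl⟩ := ht.fin_param
  choose f hfc hfp using fun i => exists_strongDual_eq_seminorm hp (c i)
  refine ⟨n, ContinuousLinearMap.pi f, Metric.ball 0 (r / 3),
    Metric.ball_mem_nhds 0 (by positivity), fun y ⟨hyK, hy⟩ => hpU ?_⟩
  rw [mem_preimage, mem_ball_zero_iff, pi_norm_lt_iff (by positivity)] at hy
  obtain ⟨i, hi⟩ : ∃ i, p (y - c i) < r / 3 := by
    simpa [mem_vadd_set_iff_neg_vadd_mem, neg_add_eq_sub] using hKt hyK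
  rw [Seminorm.mem_ball_zero]
  calc
    p y = p (c i + (y - c i)) := by rw [add_sub_cancel]
    _ ≤ p (c i) + p (y - c i) := map_add_le_add p _ _
    _ = f i y - f i (y - c i) + p (y - c i) := by rw [← map_sub, sub_sub_cancel, hfc]
    _ ≤ |f i y| + p (y - c i) + p (y - c i) := by
      linarith [le_abs_self (f i y), neg_le_of_abs_le (hfp i (y - c i))]
    _ < r / 3 + r / 3 + r / 3 := by linarith [show |f i y| < r / 3 from hy i]
    _ = r := by ring

end NormingFunctionals

section SumOfNarrow

open Set Filter Topology

variable {Ω : Type*} [MeasurableSpace Ω] {μ : Measure Ω} [IsFiniteMeasure μ]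

lemma IsNarrow.prodMk {Y Z : Type*} [AddCommGroup Y] [TopologicalSpace Y] [IsTopologicalAddGroup Y]
    [AddCommGroup Z] [Module ℝ Z] [UniformSpace Z] [IsUniformAddGroup Z] [PolynormableSpace ℝ Z]
    {T : (Ω → ℝ) → Y} {S : (Ω → ℝ) → Z} (hT : IsNarrow μ T) (hS : IsNarrow μ S)
    (hTadd : AdditiveOnSigns T) (hSadd : AdditiveOnSigns S)
    (hStb : TotallyBounded (S '' {x | IsSign x})) : IsNarrow μ fun x => (T x, S x) := by
  intro A hA hμA W hW
  rw [Prod.zero_eq_mk, mem_nhds_prod_iff] at hW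
  obtain ⟨U₁, hU₁, U₂, hU₂, hU⟩ := hW
  obtain ⟨n, F, V, hV, hFV⟩ := exists_inter_preimage_subset_of_totallyBounded hStb hU₂
  let f : Fin n → StrongDual ℝ Z := fun i => ContinuousLinearMap.proj i ∘L F
  have hbdd : ∀ i, BddAbove ((f i ∘ S) '' {x | IsSign x}) := fun i => by
    rw [image_comp]
    exact (hStb.image (f i).uniformContinuous).isBounded.bddAbove
  obtain ⟨x, hx, hTx, hFx⟩ :=
    hT.prodMk_pi hTadd (fun i => hS.comp (f i).continuous.continuousAt (map_zero _))
      (fun i => hSadd.map_comp (f i)) hbdd A hA hμA (U₁ ×ˢ V) (prod_mem_nhds hU₁ hV)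
  exact ⟨x, hx, hU ⟨hTx, hFV ⟨mem_image_of_mem S hx.1.1, hFx⟩⟩⟩

theorem stmt_9_general {Y : Type*} [AddCommGroup Y] [Module ℝ Y] [UniformSpace Y]
    [IsUniformAddGroup Y] [ContinuousSMul ℝ Y] [LocallyConvexSpace ℝ Y] {T₁ T₂ : (Ω → ℝ) → Y}
    (h₁ : IsNarrow μ T₁) (h₂ : IsNarrow μ T₂) (h₁add : AdditiveOnSigns T₁)
    (h₂add : AdditiveOnSigns T₂) (h₂tb : TotallyBounded (T₂ '' {x | IsSign x})) :
    IsNarrow μ (T₁ + T₂) :=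
  (h₁.prodMk h₂ h₁add h₂add h₂tb).comp (f := fun p : Y × Y => p.1 + p.2)
    continuous_add.continuousAt (add_zero 0)

end SumOfNarrow

section FSpace

open Set Filter Topology

namespace FSpaceNorm

variable {Y : Type*} [AddCommGroup Y] [Module ℝ Y] (FY : FSpaceNorm Y)

/-- An F-norm, viewed as a group norm. It provides the metric and the topology of the F-space. -/
abbrev toNormedAddCommGroup : NormedAddCommGroup Y :=
  AddGroupNorm.toNormedAddCommGroup
    { toFun := FY.norm
      map_zero' := (FY.eq_zero_iff 0).2 rfl
      add_le' := FY.add_le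
      neg' := FY.neg
      eq_zero_of_map_eq_zero' := fun y => (FY.eq_zero_iff y).1 }

lemma norm_smul_le_nsmul {a : ℝ} {n : ℕ} (ha : |a| ≤ n) (y : Y) :
    FY.norm (a • y) ≤ FY.norm (n • y) := by
  rcases n.eq_zero_or_pos with rfl | hn
  · rw [abs_nonpos_iff.1 (ha.trans_eq Nat.cast_zero), zero_smul, zero_smul]
  have hn' : (0 : ℝ) < n := Nat.cast_pos.2 hn
  have h_eq : a • y = (a / n) • n • y := by
    rw [← Nat.cast_smul_eq_nsmul ℝ n y, smul_smul, div_mul_cancel₀ a hn'.ne']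
  rw [h_eq]
  refine FY.smul_le _ _ ?_
  rwa [abs_div, Nat.abs_cast, div_le_one hn']

lemma continuousSMul : letI := FY.toNormedAddCommGroup; ContinuousSMul ℝ Y := by
  let := FY.toNormedAddCommGroup
  refine ContinuousSMul.of_nhds_zero ?_ (fun y => ?_) (fun a => ?_)
  · have h_le : ∀ᶠ p : ℝ × Y in 𝓝 0 ×ˢ 𝓝 0, ‖p.1 • p.2‖ ≤ ‖p.2‖ :=
      (tendsto_fst.eventually (Metric.closedBall_mem_nhds (0 : ℝ) one_pos)).mono fun p hp =>
        FY.smul_le p.1 p.2 (mem_closedBall_zero_iff.1 hp)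
    exact squeeze_zero_norm' h_le (tendsto_norm_zero.comp tendsto_snd)
  · refine Metric.nhds_basis_closedBall.tendsto_iff Metric.nhds_basis_closedBall |>.2 fun ε hε => ?_
    obtain ⟨δ, hδ, h⟩ := FY.smul_cont y ε hε
    exact ⟨δ, hδ, fun a ha => mem_closedBall_zero_iff.2 (h a (mem_closedBall_zero_iff.1 ha))⟩
  · obtain ⟨n, hn⟩ := exists_nat_ge |a|
    have h_nsmul : Tendsto (fun y : Y => ‖n • y‖) (𝓝 0) (𝓝 0) :=
      (continuous_norm.comp (continuous_nsmul n)).tendsto' 0 0 (by simp)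
    exact squeeze_zero_norm (fun y => FY.norm_smul_le_nsmul hn y) h_nsmul

lemma locallyConvexSpace
    (hlc : ∀ ε > (0 : ℝ), ∃ C : Set Y, Convex ℝ C ∧
      (∃ δ > (0 : ℝ), ∀ y : Y, FY.norm y ≤ δ → y ∈ C) ∧ ∀ y ∈ C, FY.norm y ≤ ε) :
    letI := FY.toNormedAddCommGroup; LocallyConvexSpace ℝ Y := by
  let := FY.toNormedAddCommGroup
  refine (locallyConvexSpace_iff_exists_convex_subset_zero ℝ Y).2 fun U hU => ?_
  obtain ⟨ε, hε, hεU⟩ := Metric.nhds_basis_closedBall.mem_iff.1 hU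
  obtain ⟨C, hC, ⟨δ, hδ, hδC⟩, hCε⟩ := hlc ε hε
  exact ⟨C, mem_of_superset (Metric.closedBall_mem_nhds 0 hδ)
    fun y hy => hδC y (mem_closedBall_zero_iff.1 hy), hC,
    fun y hy => hεU (mem_closedBall_zero_iff.2 (hCε y hy))⟩

end FSpaceNorm

namespace KOperator

variable {Ω : Type*} [MeasurableSpace Ω] {μ : Measure Ω} {X : KotheFSpace Ω μ} {Y : Type*}
  [AddCommGroup Y] [Module ℝ Y] {FY : FSpaceNorm Y} {T : KOperator X Y FY}

lemma additiveOnSigns (T : KOperator X Y FY) : AdditiveOnSigns T.toFun :=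
  fun x y hx hy _ => T.map_add x y (hx.mem_s9 X) (hy.mem_s9 X)

lemma Narrow.isNarrow (hT : T.Narrow) :
    letI := FY.toNormedAddCommGroup; IsNarrow μ T.toFun :=
  let := FY.toNormedAddCommGroup
  isNarrow_iff_norm_lt.2 hT

lemma RelCompactSigns.totallyBounded (hT : T.RelCompactSigns) :
    letI := FY.toNormedAddCommGroup; TotallyBounded (T.toFun '' {x | IsSign x}) := by
  let := FY.toNormedAddCommGroup
  refine Metric.totallyBounded_iff.2 fun ε hε => ?_
  obtain ⟨n, c, hc⟩ := hT (ε / 2) (half_pos hε)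
  refine ⟨range c, finite_range c, ?_⟩
  rintro _ ⟨x, hx, rfl⟩
  obtain ⟨i, hi⟩ := hc x hx
  refine mem_biUnion (mem_range_self i) ?_
  rw [mem_ball_iff_norm]
  exact hi.trans_lt (half_lt_self hε)

end KOperator

end FSpace

/-- Theorem 5.4: `Y` a locally convex F-space, `T₁` narrow, `T₂` narrow with `T₂(Z)`
relatively compact; then `T₁ + T₂` is narrow. -/
theorem stmt_9 {Ω : Type*} [MeasurableSpace Ω] (μ : Measure Ω)
    [IsFiniteMeasure μ] (hμ : Atomless μ)
    (X : KotheFSpace Ω μ) (Y : Type*) [AddCommGroup Y] [Module ℝ Y]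
    (FY : FSpaceNorm Y)
    (hlc : ∀ ε > (0 : ℝ), ∃ C : Set Y, Convex ℝ C ∧
      (∃ δ > (0 : ℝ), ∀ y : Y, FY.norm y ≤ δ → y ∈ C) ∧
      ∀ y ∈ C, FY.norm y ≤ ε)
    (T₁ T₂ : KOperator X Y FY)
    (h₁ : T₁.Narrow) (h₂ : T₂.Narrow) (h₂cpt : T₂.RelCompactSigns) :
    ∀ A : Set Ω, MeasurableSet A → 0 < μ A → ∀ ε > (0 : ℝ),
      ∃ x : Ω → ℝ, IsMeanZeroSignOn μ x A ∧
        FY.norm (T₁.toFun x + T₂.toFun x) < ε := by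
  let := FY.toNormedAddCommGroup
  have := FY.continuousSMul
  have := FY.locallyConvexSpace hlc
  exact isNarrow_iff_norm_lt.1 <| stmt_9_general h₁.isNarrow h₂.isNarrow T₁.additiveOnSigns
    T₂.additiveOnSigns h₂cpt.totallyBounded
end
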